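/- Quasi-semicontinuity of BV functions: Let u ∈ BV_loc(X) and let ε > 0. Then there exists an open set G ⊂ X with capa_1(G) < ε such that the restriction of the lower approximate limit u^∧ to X∖G is real-valued and lower semicontinuous, and the restriction of the upper approximate limit u^∨ to X∖G is real-valued and upper semicontinuous. -/

import Mathlib

open MeasureTheory Filter Metric Set
open scoped Topology ENNReal NNReal symmDiff

noncomputable section

namespace PaperBV

/-- A rectifiable curve parametrized by arc-length: a `1`-Lipschitz map on `[0, len]`. -/
structure Curve (X : Type*) [MetricSpace X] where
  len : ℝ
  len_nonneg : 0 ≤ len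
  toFun : ℝ → X
  lip : LipschitzOnWith 1 toFun (Set.Icc 0 len)

variable {X : Type*} [MetricSpace X] [MeasurableSpace X] [BorelSpace X]

/-- The curve lies in the set `A`. -/
def Curve.In (γ : Curve X) (A : Set X) : Prop :=
  ∀ t ∈ Set.Icc (0 : ℝ) γ.len, γ.toFun t ∈ A

/-- The curve integral `∫_γ g ds` of a nonnegative function, for an
arc-length parametrized curve. -/
def Curve.integral (γ : Curve X) (g : X → ℝ≥0∞) : ℝ≥0∞ :=
  ∫⁻ t in Set.Icc (0 : ℝ) γ.len, g (γ.toFun t)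

/-- The upper gradient inequality `|u(x) - u(y)| ≤ ∫_γ g ds` along the curve `γ`,
where `x, y` are the endpoints of `γ`. -/
def UGIneq (u : X → ℝ) (g : X → ℝ≥0∞) (γ : Curve X) : Prop :=
  ENNReal.ofReal |u (γ.toFun 0) - u (γ.toFun γ.len)| ≤ γ.integral g

/-- `g` is an upper gradient of `u` on `X`: `g` is nonnegative (automatic in `ℝ≥0∞`),
Borel, and the upper gradient inequality holds along every curve. -/
def IsUpperGradient (u : X → ℝ) (g : X → ℝ≥0∞) : Prop :=
  Measurable g ∧ ∀ γ : Curve X, UGIneq u g γ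

/-- A family of curves has zero `1`-modulus: there is a nonnegative Borel function
`ρ ∈ L¹(X)` whose curve integral is infinite along every curve of the family. -/
def ZeroMod (μ : Measure X) (Γ : Set (Curve X)) : Prop :=
  ∃ ρ : X → ℝ≥0∞, Measurable ρ ∧ (∫⁻ x, ρ x ∂μ) < ∞ ∧ ∀ γ ∈ Γ, γ.integral ρ = ∞

/-- `g` is a `1`-weak upper gradient of `u` in `A`: `g` is nonnegative, `μ`-measurable,
and the upper gradient inequality holds along `1`-a.e. curve in `A`. -/
def IsWeakUpperGradientOn (μ : Measure X) (u : X → ℝ) (g : X → ℝ≥0∞) (A : Set X) : Prop :=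
  AEMeasurable g μ ∧ ZeroMod μ {γ : Curve X | γ.In A ∧ ¬ UGIneq u g γ}

/-- A nonnegative function `g` belongs to `L¹_loc(A)`. -/
def LIntegrableLocOn (μ : Measure X) (g : X → ℝ≥0∞) (A : Set X) : Prop :=
  ∀ x ∈ A, ∃ r > (0 : ℝ), (∫⁻ y in A ∩ Metric.ball x r, g y ∂μ) < ∞

/-- `g` is the minimal `1`-weak upper gradient of `u` in `A`: a `1`-weak upper gradient
satisfying `g ≤ g'` `μ`-a.e. in `A` for every `1`-weak upper gradient `g' ∈ L¹_loc(A)`. -/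
def IsMinimalWUG (μ : Measure X) (u : X → ℝ) (g : X → ℝ≥0∞) (A : Set X) : Prop :=
  IsWeakUpperGradientOn μ u g A ∧
    ∀ g' : X → ℝ≥0∞, IsWeakUpperGradientOn μ u g' A → LIntegrableLocOn μ g' A →
      ∀ᵐ x ∂(μ.restrict A), g x ≤ g' x

/-- The Newtonian norm `‖u‖_{N^{1,1}(A)}` (valued in `ℝ≥0∞`). -/
def NNorm (μ : Measure X) (A : Set X) (u : X → ℝ) : ℝ≥0∞ :=
  (∫⁻ x in A, ENNReal.ofReal |u x| ∂μ) +
    ⨅ (g : X → ℝ≥0∞) (_ : IsWeakUpperGradientOn μ u g A), ∫⁻ x in A, g x ∂μ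

/-- `u ∈ N^{1,1}(A)`. -/
def MemN11 (μ : Measure X) (A : Set X) (u : X → ℝ) : Prop :=
  NNorm μ A u < ∞

/-- `u ∈ N^{1,1}_loc(A)`: every point of `A` has a ball `B` with `u ∈ N^{1,1}(A ∩ B)`. -/
def MemN11Loc (μ : Measure X) (A : Set X) (u : X → ℝ) : Prop :=
  ∀ x ∈ A, ∃ r > (0 : ℝ), NNorm μ (A ∩ Metric.ball x r) u < ∞

/-- `u ∈ N^{1,1}(Ω')` for every bounded open `Ω' ⊆ X`. -/
def MemN11LocBounded (μ : Measure X) (u : X → ℝ) : Prop :=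
  ∀ Ω' : Set X, IsOpen Ω' → Bornology.IsBounded Ω' → NNorm μ Ω' u < ∞

/-- `u ∈ N^{1,1}_0(Ω)`: `u ∈ N^{1,1}(X)` and `u = 0` outside `Ω`. -/
def MemN110 (μ : Measure X) (Ω : Set X) (u : X → ℝ) : Prop :=
  MemN11 μ Set.univ u ∧ ∀ x ∉ Ω, u x = 0

/-- The `1`-capacity `capa₁(A) = inf {‖u‖_{N^{1,1}(X)} : u ∈ N^{1,1}(X), u ≥ 1 on A}`. -/
def capa1 (μ : Measure X) (A : Set X) : ℝ≥0∞ :=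
  ⨅ (u : X → ℝ) (_ : MemN11 μ Set.univ u) (_ : ∀ x ∈ A, 1 ≤ u x), NNorm μ Set.univ u

/-- `U` is `1`-quasiopen: for every `ε > 0` there is an open `G` with `capa₁(G) < ε`
such that `U ∪ G` is open. -/
def QuasiOpen (μ : Measure X) (U : Set X) : Prop :=
  ∀ ε : ℝ, 0 < ε → ∃ G : Set X, IsOpen G ∧ capa1 μ G < ENNReal.ofReal ε ∧ IsOpen (U ∪ G)

/-- `u ∈ L¹_loc(A)`. -/
def MemL1Loc (μ : Measure X) (A : Set X) (u : X → ℝ) : Prop :=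
  AEMeasurable u (μ.restrict A) ∧
    ∀ x ∈ A, ∃ r > (0 : ℝ), (∫⁻ y in A ∩ Metric.ball x r, ENNReal.ofReal |u y| ∂μ) < ∞

/-- `v i → u` in `L¹_loc(A)`: every `x ∈ A` has a ball `B` with `v i → u` in `L¹(A ∩ B)`. -/
def L1LocConv (μ : Measure X) (A : Set X) (v : ℕ → X → ℝ) (u : X → ℝ) : Prop :=
  ∀ x ∈ A, ∃ r > (0 : ℝ),
    Filter.Tendsto (fun i => ∫⁻ y in A ∩ Metric.ball x r, ENNReal.ofReal |v i y - u y| ∂μ)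
      Filter.atTop (𝓝 0)

/-- `u` is locally Lipschitz on `Ω`. -/
def LocLipOn (u : X → ℝ) (Ω : Set X) : Prop :=
  ∀ x ∈ Ω, ∃ r > (0 : ℝ), ∃ K : ℝ≥0, LipschitzOnWith K u (Ω ∩ Metric.ball x r)

/-- The total variation `‖Du‖(Ω)` of `u` in an open set `Ω`: the infimum of
`liminf_i ∫_Ω g_{v i} dμ` over sequences of locally Lipschitz functions `v i → u`
in `L¹_loc(Ω)`, where `g_{v i}` is the minimal `1`-weak upper gradient of `v i` in `Ω`. -/
def tvOpen (μ : Measure X) (Ω : Set X) (u : X → ℝ) : ℝ≥0∞ :=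
  ⨅ (v : ℕ → X → ℝ) (g : ℕ → X → ℝ≥0∞) (_ : ∀ i, LocLipOn (v i) Ω)
    (_ : ∀ i, IsMinimalWUG μ (v i) (g i) Ω) (_ : L1LocConv μ Ω v u),
    Filter.liminf (fun i => ∫⁻ x in Ω, g i x ∂μ) Filter.atTop

/-- The total variation `‖Du‖(A)` of `u` in an arbitrary set `A`:
`inf {‖Du‖(Ω) : Ω ⊇ A open}`. -/
def tv (μ : Measure X) (A : Set X) (u : X → ℝ) : ℝ≥0∞ :=
  ⨅ (Ω : Set X) (_ : IsOpen Ω) (_ : A ⊆ Ω), tvOpen μ Ω u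

/-- The perimeter `P(E, A) = ‖Dχ_E‖(A)` for arbitrary `A`. -/
def perim (μ : Measure X) (E A : Set X) : ℝ≥0∞ :=
  tv μ A (Set.indicator E (fun _ => (1 : ℝ)))

/-- The perimeter `P(E, Ω) = ‖Dχ_E‖(Ω)` for open `Ω`. -/
def perimOpen (μ : Measure X) (E Ω : Set X) : ℝ≥0∞ :=
  tvOpen μ Ω (Set.indicator E (fun _ => (1 : ℝ)))

/-- The measure `μ` is doubling with constant `Cd`. -/
def Doubling (μ : Measure X) (Cd : ℝ) : Prop :=
  1 ≤ Cd ∧ ∀ (x : X) (r : ℝ), 0 < r →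
    0 < μ (Metric.ball x (2 * r)) ∧
      μ (Metric.ball x (2 * r)) ≤ ENNReal.ofReal Cd * μ (Metric.ball x r) ∧
      μ (Metric.ball x r) < ∞

/-- The space supports a `(1,1)`-Poincaré inequality with constants `CP, lam`. -/
def Poincare (μ : Measure X) (CP lam : ℝ) : Prop :=
  1 ≤ CP ∧ 1 ≤ lam ∧ ∀ (x : X) (r : ℝ), 0 < r → ∀ (u : X → ℝ) (g : X → ℝ≥0∞),
    MemL1Loc μ Set.univ u → IsUpperGradient u g →
      ENNReal.ofReal (⨍ y in Metric.ball x r, |u y - ⨍ z in Metric.ball x r, u z ∂μ| ∂μ)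
        ≤ ENNReal.ofReal (CP * r) *
            ((∫⁻ y in Metric.ball x (lam * r), g y ∂μ) / μ (Metric.ball x (lam * r)))

/-- The restricted spherical Hausdorff content of codimension one. -/
def HR (μ : Measure X) (R : ℝ) (A : Set X) : ℝ≥0∞ :=
  ⨅ (c : ℕ → X) (r : ℕ → ℝ) (_ : ∀ i, 0 < r i ∧ r i ≤ R)
    (_ : A ⊆ ⋃ i, Metric.ball (c i) (r i)),
    ∑' i, μ (Metric.ball (c i) (r i)) / ENNReal.ofReal (r i)

/-- The codimension-one Hausdorff measure `H(A) = lim_{R → 0} H_R(A)`. -/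
def Hcodim (μ : Measure X) (A : Set X) : ℝ≥0∞ :=
  ⨆ (R : ℝ) (_ : 0 < R), HR μ R A

/-- The lower approximate limit `u^∧`. -/
def lowerApprox (μ : Measure X) (u : X → ℝ) (x : X) : EReal :=
  sSup ((fun t : ℝ => (t : EReal)) ''
    {t : ℝ | Filter.Tendsto
      (fun r => μ (Metric.ball x r ∩ {y | u y < t}) / μ (Metric.ball x r))
      (𝓝[>] (0 : ℝ)) (𝓝 0)})

/-- The upper approximate limit `u^∨`. -/
def upperApprox (μ : Measure X) (u : X → ℝ) (x : X) : EReal :=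
  sInf ((fun t : ℝ => (t : EReal)) ''
    {t : ℝ | Filter.Tendsto
      (fun r => μ (Metric.ball x r ∩ {y | t < u y}) / μ (Metric.ball x r))
      (𝓝[>] (0 : ℝ)) (𝓝 0)})

/-- `u ∈ BV_loc(X)`: `u ∈ L¹_loc(X)` with `‖Du‖(Ω') < ∞` for every bounded open `Ω'`. -/
def MemBVLoc (μ : Measure X) (u : X → ℝ) : Prop :=
  MemL1Loc μ Set.univ u ∧
    ∀ Ω' : Set X, IsOpen Ω' → Bornology.IsBounded Ω' → tvOpen μ Ω' u < ∞

/-- The measure-theoretic interior `I_E`. -/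
def mInterior (μ : Measure X) (E : Set X) : Set X :=
  {x | Filter.Tendsto (fun r => μ (Metric.ball x r \ E) / μ (Metric.ball x r))
    (𝓝[>] (0 : ℝ)) (𝓝 0)}

/-- The measure-theoretic exterior `O_E`. -/
def mExterior (μ : Measure X) (E : Set X) : Set X :=
  {x | Filter.Tendsto (fun r => μ (Metric.ball x r ∩ E) / μ (Metric.ball x r))
    (𝓝[>] (0 : ℝ)) (𝓝 0)}

/-- The measure-theoretic boundary `∂*E`: the points where both `E` and its complement
have positive upper density. -/
def mBoundary (μ : Measure X) (E : Set X) : Set X :=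
  {x | 0 < Filter.limsup (fun r => μ (Metric.ball x r ∩ E) / μ (Metric.ball x r))
        (𝓝[>] (0 : ℝ)) ∧
       0 < Filter.limsup (fun r => μ (Metric.ball x r \ E) / μ (Metric.ball x r))
        (𝓝[>] (0 : ℝ))}


set_option linter.unusedSectionVars false

/-! ### Curves and locality -/

lemma Curve.continuousOn (γ : Curve X) : ContinuousOn γ.toFun (Icc 0 γ.len) := γ.lip.continuousOn

/-- subcurve -/
def Curve.sub (γ : Curve X) (s t : ℝ) (hs : 0 ≤ s) (hst : s ≤ t) (ht : t ≤ γ.len) : Curve X where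
  len := t - s
  len_nonneg := by linarith
  toFun := fun x => γ.toFun (s + x)
  lip := by
    intro x hx y hy
    have := γ.lip (x := s + x) ⟨by linarith [hx.1], by linarith [hx.2]⟩ (y := s + y)
      ⟨by linarith [hy.1], by linarith [hy.2]⟩
    simpa using this

lemma Curve.sub_integral (γ : Curve X) (s t : ℝ) (hs : 0 ≤ s) (hst : s ≤ t) (ht : t ≤ γ.len)
    (g : X → ℝ≥0∞) :
    (γ.sub s t hs hst ht).integral g = ∫⁻ x in Icc s t, g (γ.toFun x) := by
  unfold Curve.integral Curve.sub
  simp only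
  have h1 := (measurePreserving_add_left volume s).setLIntegral_comp_preimage_emb
    (MeasurableEquiv.addLeft s).measurableEmbedding (fun x => g (γ.toFun x)) (Icc s t)
  rw [← h1]
  congr 2
  ext x
  simp

lemma Curve.sub_In {γ : Curve X} {A : Set X} (h : γ.In A) (s t : ℝ) (hs : 0 ≤ s) (hst : s ≤ t)
    (ht : t ≤ γ.len) : (γ.sub s t hs hst ht).In A := by
  intro x hx
  exact h (s + x) ⟨by linarith [hx.1], by
    have := hx.2
    simp only [Curve.sub] at this
    linarith⟩

/-- genuine upper gradient along all curves in `Ω` -/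
def UGOn (Ω : Set X) (v : X → ℝ) (g : X → ℝ≥0∞) : Prop :=
  ∀ γ : Curve X, γ.In Ω → UGIneq v g γ

lemma UGOn.sub {Ω : Set X} {v : X → ℝ} {g : X → ℝ≥0∞} (h : UGOn Ω v g) {γ : Curve X}
    (hγ : γ.In Ω) {s t : ℝ} (hs : 0 ≤ s) (hst : s ≤ t) (ht : t ≤ γ.len) :
    ENNReal.ofReal |v (γ.toFun s) - v (γ.toFun t)| ≤ ∫⁻ x in Icc s t, g (γ.toFun x) := by
  have := h _ (Curve.sub_In hγ s t hs hst ht)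
  unfold UGIneq at this
  rw [Curve.sub_integral] at this
  simpa [Curve.sub] using this

lemma Icc_lint_add (f : ℝ → ℝ≥0∞) {a b c : ℝ} (hab : a ≤ b) (hbc : b ≤ c) :
    (∫⁻ x in Icc a b, f x) + (∫⁻ x in Icc b c, f x) = ∫⁻ x in Icc a c, f x := by
  rw [← setLIntegral_congr (Ioc_ae_eq_Icc (a := b) (b := c)),
    ← lintegral_union measurableSet_Ioc, Icc_union_Ioc_eq_Icc hab hbc]
  rw [Set.disjoint_left]
  intro x hx hx'
  exact absurd hx.2 (not_le.2 hx'.1)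

lemma ofReal_abs_tri (a b c : ℝ) :
    ENNReal.ofReal |a - c| ≤ ENNReal.ofReal |a - b| + ENNReal.ofReal |b - c| := by
  rw [← ENNReal.ofReal_add (abs_nonneg _) (abs_nonneg _)]
  exact ENNReal.ofReal_le_ofReal (abs_sub_le a b c)

/-- locality of upper gradients -/
lemma ugOn_of_local {Ω : Set X} {h : X → ℝ} {G : X → ℝ≥0∞}
    (hloc : ∀ x ∈ Ω, ∃ U : Set X, IsOpen U ∧ x ∈ U ∧ ∃ δ > (0 : ℝ), ∀ γ : Curve X,
      γ.In (U ∩ Ω) → γ.len ≤ δ → UGIneq h G γ) : UGOn Ω h G := by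
  intro γ hγ
  choose! U hUo hxU δ hδ hU using hloc
  let c : Icc (0 : ℝ) γ.len → Set (Icc (0 : ℝ) γ.len) := fun t =>
    (fun s : Icc (0 : ℝ) γ.len => γ.toFun s) ⁻¹' (U (γ.toFun t)) ∩
      Metric.ball t (δ (γ.toFun t) / 2)
  have hcont : Continuous (fun s : Icc (0 : ℝ) γ.len => γ.toFun s) :=
    continuousOn_iff_continuous_restrict.1 γ.continuousOn
  obtain ⟨t, t0, tm, ⟨m, hm⟩, ht⟩ := exists_monotone_Icc_subset_open_cover_Icc γ.len_nonneg
    (c := c) (fun i => ((hUo _ (hγ i i.2)).preimage hcont).inter isOpen_ball)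
    (fun s _ => mem_iUnion.2 ⟨s, hxU _ (hγ s s.2), mem_ball_self (half_pos (hδ _ (hγ s s.2)))⟩)
  have key : ∀ n, ENNReal.ofReal |h (γ.toFun 0) - h (γ.toFun (t n))| ≤
      ∫⁻ x in Icc 0 (t n : ℝ), G (γ.toFun x) := by
    intro n
    induction n with
    | zero => simp [t0]
    | succ n ih =>
      have h1 : (t n : ℝ) ≤ t (n+1) := tm (Nat.le_succ n)
      have hstep : ENNReal.ofReal |h (γ.toFun (t n)) - h (γ.toFun (t (n+1)))| ≤
          ∫⁻ x in Icc (t n : ℝ) (t (n+1)), G (γ.toFun x) := by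
        obtain ⟨i, hi⟩ := ht n
        have hi0 := hi (left_mem_Icc.2 (tm (Nat.le_succ n)))
        have hi1 := hi (right_mem_Icc.2 (tm (Nat.le_succ n)))
        have := hU _ (hγ i i.2) (γ.sub (t n) (t (n+1)) (t n).2.1 h1 (t (n+1)).2.2) (by
          intro x hx
          simp only [Curve.sub] at hx ⊢
          have hxx : (t n : ℝ) + x ∈ Icc (0 : ℝ) γ.len :=
            ⟨by linarith [hx.1, (t n).2.1], by linarith [hx.2, (t (n+1)).2.2]⟩
          refine ⟨?_, hγ _ hxx⟩
          have : (⟨(t n : ℝ) + x, hxx⟩ : Icc (0 : ℝ) γ.len) ∈ c i := by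
            apply hi
            constructor
            · show (t n : ℝ) ≤ t n + x
              linarith [hx.1]
            · show (t n : ℝ) + x ≤ t (n+1)
              linarith [hx.2]
          exact this.1) (by
          have a0 := hi0.2
          have a1 := hi1.2
          rw [mem_ball, Subtype.dist_eq, Real.dist_eq] at a0 a1
          simp only [Curve.sub]
          have := abs_lt.1 a0
          have := abs_lt.1 a1
          linarith)
        unfold UGIneq at this
        rw [Curve.sub_integral] at this
        simpa [Curve.sub] using this
      rw [← Icc_lint_add _ (t n).2.1 h1]
      exact (ofReal_abs_tri _ _ _).trans (add_le_add ih hstep)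
  have := key m
  rw [hm m le_rfl] at this
  exact this

lemma Curve.aemeas (γ : Curve X) : AEMeasurable γ.toFun (volume.restrict (Icc 0 γ.len)) :=
  γ.continuousOn.aemeasurable measurableSet_Icc

lemma Curve.integral_mono {γ : Curve X} {A : Set X} (hγ : γ.In A) {g g' : X → ℝ≥0∞}
    (h : ∀ x ∈ A, g x ≤ g' x) : γ.integral g ≤ γ.integral g' :=
  setLIntegral_mono' measurableSet_Icc fun x hx => h _ (hγ x hx)

lemma Curve.In.mono {γ : Curve X} {A B : Set X} (hγ : γ.In A) (h : A ⊆ B) : γ.In B :=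
  fun t ht => h (hγ t ht)

/-- product rule on short curves -/
lemma ug_prod {Ω : Set X} {v ψ : X → ℝ} {g : X → ℝ≥0∞} (hg : Measurable g)
    (hv : ∀ x, v x ∈ Icc (0 : ℝ) 1) (hψ : ∀ x, ψ x ∈ Icc (0 : ℝ) 1)
    (hu : UGOn Ω v g) {L : ℝ} (hL : 0 < L) (hlip : ∀ x y, |ψ x - ψ y| ≤ L * dist x y)
    {γ : Curve X} (hγ : γ.In Ω) (hlen : γ.len ≤ 1 / L) :
    UGIneq (fun x => v x * ψ x) (fun x => 2 * g x + ENNReal.ofReal L * ENNReal.ofReal (v x)) γ := by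
  unfold UGIneq
  have hmeas : AEMeasurable (fun t => g (γ.toFun t)) (volume.restrict (Icc 0 γ.len)) :=
    hg.comp_aemeasurable γ.aemeas
  set I := γ.integral g with hI
  have hint : γ.integral (fun x => 2 * g x + ENNReal.ofReal L * ENNReal.ofReal (v x)) =
      2 * I + ENNReal.ofReal L * γ.integral (fun x => ENNReal.ofReal (v x)) := by
    unfold Curve.integral
    rw [lintegral_add_left' (hmeas.const_mul 2), lintegral_const_mul' _ _ (by simp),
      lintegral_const_mul' _ _ (by simp)]
    rfl
  rw [hint]
  set a := γ.toFun 0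
  set b := γ.toFun γ.len
  have hdist : dist a b ≤ γ.len := by
    have := γ.lip.dist_le_mul 0 (left_mem_Icc.2 γ.len_nonneg) γ.len (right_mem_Icc.2 γ.len_nonneg)
    simpa [Real.dist_eq, abs_of_nonneg γ.len_nonneg] using this
  have h1 : ENNReal.ofReal |v a - v b| ≤ I := hu γ hγ
  -- v a * len ≤ ∫ v + I * len
  have h2 : ENNReal.ofReal (v a) * ENNReal.ofReal γ.len ≤
      γ.integral (fun x => ENNReal.ofReal (v x)) + I * ENNReal.ofReal γ.len := by
    have : ∀ t ∈ Icc 0 γ.len, ENNReal.ofReal (v a) ≤ ENNReal.ofReal (v (γ.toFun t)) + I := by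
      intro t ht
      have h3 := hu.sub hγ le_rfl ht.1 ht.2
      have h4 : ∫⁻ x in Icc 0 t, g (γ.toFun x) ≤ I :=
        lintegral_mono_set (Icc_subset_Icc_right ht.2)
      calc ENNReal.ofReal (v a) ≤ ENNReal.ofReal (v (γ.toFun t) + |v a - v (γ.toFun t)|) := by
            apply ENNReal.ofReal_le_ofReal
            linarith [le_abs_self (v a - v (γ.toFun t))]
        _ = _ + _ := ENNReal.ofReal_add (hv _).1 (abs_nonneg _)
        _ ≤ _ := by gcongr; exact h3.trans h4
    calc ENNReal.ofReal (v a) * ENNReal.ofReal γ.len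
        = ∫⁻ t in Icc 0 γ.len, ENNReal.ofReal (v a) := by simp
      _ ≤ ∫⁻ t in Icc 0 γ.len, (ENNReal.ofReal (v (γ.toFun t)) + I) :=
          setLIntegral_mono' measurableSet_Icc this
      _ = _ := by
          rw [lintegral_add_right _ measurable_const]
          simp [Curve.integral]
  have h3 : |v a * ψ a - v b * ψ b| ≤ |v a - v b| + v a * (L * γ.len) := by
    have e : v a * ψ a - v b * ψ b = ψ b * (v a - v b) + v a * (ψ a - ψ b) := by ring
    rw [e]
    refine (abs_add_le _ _).trans (add_le_add ?_ ?_)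
    · rw [abs_mul, abs_of_nonneg (hψ b).1]
      exact mul_le_of_le_one_left (abs_nonneg _) (hψ b).2
    · rw [abs_mul, abs_of_nonneg (hv a).1]
      have := hlip a b
      have h5 : L * dist a b ≤ L * γ.len := by gcongr
      exact mul_le_mul_of_nonneg_left (this.trans h5) (hv a).1
  calc ENNReal.ofReal |v a * ψ a - v b * ψ b|
      ≤ ENNReal.ofReal (|v a - v b| + L * (v a * γ.len)) := by
        apply ENNReal.ofReal_le_ofReal; linarith
    _ = ENNReal.ofReal |v a - v b| + ENNReal.ofReal L * (ENNReal.ofReal (v a) * ENNReal.ofReal γ.len) := by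
        rw [ENNReal.ofReal_add (abs_nonneg _) (by have := (hv a).1; have := γ.len_nonneg; positivity),
          ENNReal.ofReal_mul hL.le, ENNReal.ofReal_mul (hv a).1]
    _ ≤ I + ENNReal.ofReal L * (γ.integral (fun x => ENNReal.ofReal (v x)) +
          I * ENNReal.ofReal γ.len) := by gcongr
    _ = I + I * (ENNReal.ofReal L * ENNReal.ofReal γ.len) +
          ENNReal.ofReal L * γ.integral (fun x => ENNReal.ofReal (v x)) := by ring
    _ ≤ I + I * 1 + ENNReal.ofReal L * γ.integral (fun x => ENNReal.ofReal (v x)) := by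
        gcongr
        rw [← ENNReal.ofReal_mul hL.le, ← ENNReal.ofReal_one]
        apply ENNReal.ofReal_le_ofReal
        calc L * γ.len ≤ L * (1 / L) := by gcongr
          _ = 1 := by field_simp
    _ = _ := by ring

/-! ### Doubling and capacity -/

structure DB (μ : Measure X) (D : ℝ≥0) : Prop where
  one : 1 ≤ D
  pos : ∀ (x : X) (r : ℝ), 0 < r → 0 < μ (ball x r)
  fin : ∀ (x : X) (r : ℝ), μ (ball x r) < ∞
  dbl : ∀ (x : X) (r : ℝ), 0 < r → μ (ball x (2 * r)) ≤ D * μ (ball x r)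

lemma db_of_doubling {μ : Measure X} {Cd : ℝ} (h : Doubling μ Cd) : DB μ Cd.toNNReal where
  one := by rw [← Real.toNNReal_one]; exact Real.toNNReal_le_toNNReal h.1
  pos x r hr := by
    have := (h.2 x (r/2) (by linarith)).1
    rwa [mul_div_cancel₀ _ (two_ne_zero)] at this
  fin x r := by
    rcases le_or_gt r 0 with h0 | h0
    · rw [ball_eq_empty.2 h0]; simp
    · exact (h.2 x r h0).2.2
  dbl x r hr := (h.2 x r hr).2.1

namespace DB
variable {μ : Measure X} {D : ℝ≥0}

lemma scale (h : DB μ D) (k : ℕ) (x : X) {r : ℝ} (hr : 0 < r) :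
    μ (ball x (2 ^ k * r)) ≤ D ^ k * μ (ball x r) := by
  induction k with
  | zero => simp
  | succ k ih =>
    calc μ (ball x (2 ^ (k+1) * r)) = μ (ball x (2 * (2 ^ k * r))) := by ring_nf
      _ ≤ D * μ (ball x (2 ^ k * r)) := h.dbl _ _ (by positivity)
      _ ≤ D * (D ^ k * μ (ball x r)) := by gcongr
      _ = _ := by ring

lemma ball_le (h : DB μ D) (k : ℕ) {x y : X} {R r : ℝ} (hr : 0 < r)
    (hk : dist x y + R ≤ 2 ^ k * r) : μ (ball x R) ≤ D ^ k * μ (ball y r) :=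
  (measure_mono (ball_subset_ball' (by linarith))).trans (h.scale k y hr)

lemma packing (h : DB μ D) (k : ℕ) {y : X} {R ρ : ℝ} (hρ : 0 < ρ) (F : Finset X)
    (hF : ∀ c ∈ F, dist c y ≤ R) (hsep : ∀ c ∈ F, ∀ d ∈ F, c ≠ d → ρ ≤ dist c d)
    (hk : 2 * R + ρ ≤ 2 ^ k * (ρ / 2)) : (F.card : ℝ≥0∞) ≤ D ^ k := by
  rcases F.eq_empty_or_nonempty with rfl | ⟨c0, hc0⟩
  · simp
  have hR : 0 ≤ R := dist_nonneg.trans (hF c0 hc0)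
  have hdisj : (F : Set X).PairwiseDisjoint (fun c => ball c (ρ / 2)) := by
    intro c hc d hd hcd
    exact ball_disjoint_ball (by linarith [hsep c hc d hd hcd])
  have h1 : ∑ c ∈ F, μ (ball c (ρ / 2)) ≤ μ (ball y (R + ρ)) := by
    rw [← measure_biUnion_finset hdisj (fun _ _ => measurableSet_ball)]
    apply measure_mono
    simp only [iUnion_subset_iff]
    intro c hc
    exact ball_subset_ball' (by linarith [hF c hc])
  have h2 : ∀ c ∈ F, μ (ball y (R + ρ)) ≤ D ^ k * μ (ball c (ρ / 2)) := by
    intro c hc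
    apply h.ball_le k (by linarith)
    have := hF c hc
    rw [dist_comm] at this
    linarith
  have h3 : (F.card : ℝ≥0∞) * μ (ball y (R + ρ)) ≤ D ^ k * μ (ball y (R + ρ)) := by
    calc (F.card : ℝ≥0∞) * μ (ball y (R + ρ)) = ∑ c ∈ F, μ (ball y (R + ρ)) := by simp
      _ ≤ ∑ c ∈ F, D ^ k * μ (ball c (ρ / 2)) := Finset.sum_le_sum h2
      _ = D ^ k * ∑ c ∈ F, μ (ball c (ρ / 2)) := by rw [Finset.mul_sum]
      _ ≤ _ := by gcongr
  exact (ENNReal.mul_le_mul_iff_left (h.pos _ _ (by linarith)).ne' (h.fin _ _).ne).1 h3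

lemma net (h : DB μ D) {A : Set X} {y : X} {R ρ : ℝ} (hρ : 0 < ρ) (hA : A ⊆ closedBall y R) :
    ∃ F : Finset X, (∀ c ∈ F, c ∈ A) ∧ (∀ c ∈ F, ∀ d ∈ F, c ≠ d → ρ ≤ dist c d) ∧
      ∀ x ∈ A, ∃ c ∈ F, dist x c < ρ := by
  classical
  obtain ⟨k, hk⟩ := pow_unbounded_of_one_lt ((2 * R + ρ) / (ρ / 2)) (one_lt_two)
  rw [div_lt_iff₀ (by linarith)] at hk
  obtain ⟨N, hN⟩ := exists_nat_gt ((D : ℝ) ^ k)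
  let P : ℕ → Prop := fun n => ∃ F : Finset X, (∀ c ∈ F, c ∈ A) ∧
    (∀ c ∈ F, ∀ d ∈ F, c ≠ d → ρ ≤ dist c d) ∧ F.card = n
  have hP0 : P 0 := ⟨∅, by simp⟩
  have hb : ∀ n, P n → n ≤ N := by
    rintro n ⟨F, h1, h2, rfl⟩
    have := h.packing k hρ F (fun c hc => mem_closedBall.1 (hA (h1 c hc))) h2 hk.le
    have h3 : ((F.card : ℝ≥0) : ℝ≥0∞) ≤ ((D ^ k : ℝ≥0) : ℝ≥0∞) := by simpa using this
    have h4 : (F.card : ℝ≥0) ≤ D ^ k := by exact_mod_cast h3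
    have h5 : (F.card : ℝ) ≤ (D : ℝ) ^ k := by exact_mod_cast h4
    exact_mod_cast (h5.trans_lt hN).le
  obtain ⟨F, h1, h2, h3⟩ := Nat.findGreatest_spec (P := P) (Nat.zero_le N) hP0
  refine ⟨F, h1, h2, ?_⟩
  by_contra! hcon
  obtain ⟨x, hx, hxF⟩ := hcon
  have hxn : x ∉ F := fun hx' => by have := hxF x hx'; simp at this; linarith
  have hP : P (F.card + 1) := by
    refine ⟨insert x F, ?_, ?_, Finset.card_insert_of_notMem hxn⟩
    · intro c hc
      rcases Finset.mem_insert.1 hc with rfl | hc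
      · exact hx
      · exact h1 c hc
    · intro c hc d hd hcd
      rcases Finset.mem_insert.1 hc with hc' | hc' <;>
        rcases Finset.mem_insert.1 hd with hd' | hd'
      · exact absurd (hc'.trans hd'.symm) hcd
      · rw [hc']; exact hxF d hd'
      · rw [hd', dist_comm]; exact hxF c hc'
      · exact h2 c hc' d hd' hcd
  have := Nat.le_findGreatest (hb _ hP) hP
  omega

lemma proper (h : DB μ D) [CompleteSpace X] : ProperSpace X := by
  refine ⟨fun x r => TotallyBounded.isCompact_of_isClosed ?_ isClosed_closedBall⟩
  rw [Metric.totallyBounded_iff]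
  intro ε hε
  obtain ⟨F, -, -, h3⟩ := h.net hε (Subset.refl (closedBall x r))
  refine ⟨F, F.finite_toSet, fun z hz => ?_⟩
  obtain ⟨c, hc, hcz⟩ := h3 z hz
  exact mem_iUnion₂.2 ⟨c, hc, hcz⟩

end DB

/-- A convenient upper bound for capacity. -/
def CapLe (μ : Measure X) (G : Set X) (a : ℝ≥0∞) : Prop :=
  ∃ (f : X → ℝ) (g : X → ℝ≥0∞), Measurable f ∧ (∀ x, f x ∈ Icc (0 : ℝ) 1) ∧ (∀ x ∈ G, f x = 1) ∧
    Measurable g ∧ UGOn univ f g ∧ (∫⁻ x, ENNReal.ofReal (f x) ∂μ) + ∫⁻ x, g x ∂μ ≤ a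

lemma CapLe.mono {μ : Measure X} {G : Set X} {a b : ℝ≥0∞} (h : CapLe μ G a) (hab : a ≤ b) :
    CapLe μ G b := by
  obtain ⟨f, g, h1, h2, h3, h4, h5, h6⟩ := h
  exact ⟨f, g, h1, h2, h3, h4, h5, h6.trans hab⟩

lemma CapLe.capa {μ : Measure X} {G : Set X} {a : ℝ≥0∞} (h : CapLe μ G a) (ha : a < ∞) :
    capa1 μ G ≤ a := by
  obtain ⟨f, g, h1, h2, h3, h4, h5, h6⟩ := h
  have hN : NNorm μ univ f ≤ a := by
    refine le_trans ?_ h6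
    unfold NNorm
    simp only [Measure.restrict_univ]
    gcongr with x
    · exact (abs_of_nonneg (h2 x).1).le
    · refine iInf₂_le_of_le g ⟨h4.aemeasurable, fun _ => 0, measurable_const, by simp, ?_⟩ le_rfl
      rintro γ ⟨hγ, hγ'⟩
      exact absurd (h5 γ hγ) hγ'
  unfold capa1
  exact iInf_le_of_le f (iInf₂_le_of_le (lt_of_le_of_lt hN ha) (fun x hx => (h3 x hx).ge) hN)

lemma CapLe.iUnion {μ : Measure X} {ι : Type*} [Countable ι] {G : ι → Set X} {a : ι → ℝ≥0∞}
    (h : ∀ i, CapLe μ (G i) (a i)) : CapLe μ (⋃ i, G i) (∑' i, a i) := by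
  choose f g h1 h2 h3 h4 h5 h6 using h
  have hbdd : ∀ x, BddAbove (range fun i => f i x) := fun x => ⟨1, by
    rintro _ ⟨i, rfl⟩; exact (h2 i x).2⟩
  refine ⟨fun x => ⨆ i, f i x, fun x => ∑' i, g i x, Measurable.iSup h1, fun x =>
    ⟨Real.iSup_nonneg fun i => (h2 i x).1, Real.iSup_le (fun i => (h2 i x).2) zero_le_one⟩, ?_,
    Measurable.ennreal_tsum h4, ?_, ?_⟩
  · intro x hx
    obtain ⟨i, hi⟩ := mem_iUnion.1 hx
    apply le_antisymm (Real.iSup_le (fun i => (h2 i x).2) zero_le_one)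
    rw [← h3 i x hi]
    exact le_ciSup (hbdd x) i
  · intro γ hγ
    unfold UGIneq Curve.integral
    rw [lintegral_tsum (f := fun i t => g i (γ.toFun t)) (fun i => (h4 i).comp_aemeasurable γ.aemeas)]
    set S := ∑' i, ∫⁻ t in Icc 0 γ.len, g i (γ.toFun t) with hS
    rcases eq_or_ne S ∞ with hS' | hS'
    · rw [hS']; exact le_top
    have hd : ∀ i, |f i (γ.toFun 0) - f i (γ.toFun γ.len)| ≤ S.toReal := by
      intro i
      have : ENNReal.ofReal |f i (γ.toFun 0) - f i (γ.toFun γ.len)| ≤ S :=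
        (h5 i γ hγ).trans (ENNReal.le_tsum (f := fun i => ∫⁻ t in Icc 0 γ.len, g i (γ.toFun t)) i)
      exact (ENNReal.ofReal_le_iff_le_toReal hS').1 this
    rw [ENNReal.ofReal_le_iff_le_toReal hS', abs_le]
    have e : ∀ x, 0 ≤ ⨆ i, f i x := fun x => Real.iSup_nonneg fun i => (h2 i x).1
    constructor
    · have : (⨆ i, f i (γ.toFun γ.len)) ≤ (⨆ i, f i (γ.toFun 0)) + S.toReal := by
        refine Real.iSup_le (fun i => ?_) (add_nonneg (e _) ENNReal.toReal_nonneg)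
        have a1 := (abs_le.1 (hd i)).1
        have a2 := le_ciSup (hbdd (γ.toFun 0)) i
        linarith
      linarith
    · have : (⨆ i, f i (γ.toFun 0)) ≤ (⨆ i, f i (γ.toFun γ.len)) + S.toReal := by
        refine Real.iSup_le (fun i => ?_) (add_nonneg (e _) ENNReal.toReal_nonneg)
        have a1 := (abs_le.1 (hd i)).2
        have a2 := le_ciSup (hbdd (γ.toFun γ.len)) i
        linarith
      linarith
  · have : ∀ x, ENNReal.ofReal (⨆ i, f i x) ≤ ∑' i, ENNReal.ofReal (f i x) := by
      intro x
      rcases eq_or_ne (∑' i, ENNReal.ofReal (f i x)) ∞ with hS' | hS'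
      · rw [hS']; exact le_top
      rw [ENNReal.ofReal_le_iff_le_toReal hS']
      refine Real.iSup_le (fun i => ?_) ENNReal.toReal_nonneg
      rw [← ENNReal.ofReal_le_iff_le_toReal hS']
      exact ENNReal.le_tsum (f := fun i => ENNReal.ofReal (f i x)) i
    calc _ ≤ (∫⁻ x, ∑' i, ENNReal.ofReal (f i x) ∂μ) + ∫⁻ x, ∑' i, g i x ∂μ := by
          gcongr with x; exact this x
      _ = ∑' i, ((∫⁻ x, ENNReal.ofReal (f i x) ∂μ) + ∫⁻ x, g i x ∂μ) := by
          rw [lintegral_tsum (fun i => (h1 i).ennreal_ofReal.aemeasurable),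
            lintegral_tsum (fun i => (h4 i).aemeasurable), ENNReal.tsum_add]
      _ ≤ _ := ENNReal.tsum_le_tsum h6

lemma CapLe.union {μ : Measure X} {G H : Set X} {a b : ℝ≥0∞} (h : CapLe μ G a)
    (h' : CapLe μ H b) : CapLe μ (G ∪ H) (a + b) := by
  have := CapLe.iUnion (μ := μ) (ι := Bool) (G := fun i => cond i G H) (a := fun i => cond i a b)
    (by rintro (_ | _) <;> assumption)
  rw [← union_eq_iUnion] at this
  simpa [tsum_fintype, add_comm] using this

/-- clamp function -/
def clamp (s : ℝ) : ℝ := max 0 (min 1 s)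

lemma clamp_mem (s : ℝ) : clamp s ∈ Icc (0 : ℝ) 1 :=
  ⟨le_max_left _ _, max_le zero_le_one (min_le_left _ _)⟩

lemma clamp_lip (s t : ℝ) : |clamp s - clamp t| ≤ |s - t| := by
  unfold clamp
  have h1 := abs_max_sub_max_le_abs (min 1 s) (min 1 t) 0
  have h2 := abs_min_sub_min_le_max 1 s 1 t
  rw [max_comm 0 (min 1 s), max_comm 0 (min 1 t)]
  refine h1.trans (h2.trans ?_)
  simp

lemma clamp_of_le {s : ℝ} (h : s ≤ 0) : clamp s = 0 := by
  unfold clamp; rw [min_eq_right (by linarith), max_eq_left h]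

lemma clamp_of_ge {s : ℝ} (h : 1 ≤ s) : clamp s = 1 := by
  unfold clamp; rw [min_eq_left h]; simp

lemma clamp_cont : Continuous clamp := by unfold clamp; fun_prop

lemma capLe_ball (μ : Measure X) (x : X) {r : ℝ} (hr : 0 < r) :
    CapLe μ (ball x r) ((1 + ENNReal.ofReal (2 / r)) * μ (ball x (2 * r))) := by
  refine ⟨fun y => clamp ((3 * r / 2 - dist y x) * (2 / r)),
    (ball x (2 * r)).indicator fun _ => ENNReal.ofReal (2 / r), ?_, fun y => clamp_mem _, ?_,
    measurable_const.indicator measurableSet_ball, ?_, ?_⟩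
  · exact (clamp_cont.comp (by fun_prop)).measurable
  · intro y hy
    apply clamp_of_ge
    have : dist y x < r := hy
    calc (1 : ℝ) = (r / 2) * (2 / r) := by field_simp
      _ ≤ _ := by gcongr; linarith
  · apply ugOn_of_local
    intro y _
    by_cases hy : dist y x < 2 * r
    · refine ⟨ball x (2 * r), isOpen_ball, hy, 1, one_pos, fun γ hγ _ => ?_⟩
      unfold UGIneq
      have h1 : γ.integral ((ball x (2 * r)).indicator fun _ => ENNReal.ofReal (2 / r)) =
          ENNReal.ofReal (2 / r * γ.len) := by
        unfold Curve.integral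
        rw [setLIntegral_congr_fun (g := fun _ => ENNReal.ofReal (2 / r)) measurableSet_Icc
          (fun t ht => indicator_of_mem (hγ t ht).1 _)]
        simp [ENNReal.ofReal_mul (show 0 ≤ 2 / r by positivity)]
      rw [h1]
      apply ENNReal.ofReal_le_ofReal
      refine (clamp_lip _ _).trans ?_
      have hdist : dist (γ.toFun 0) (γ.toFun γ.len) ≤ γ.len := by
        have := γ.lip.dist_le_mul 0 (left_mem_Icc.2 γ.len_nonneg) γ.len
          (right_mem_Icc.2 γ.len_nonneg)
        simpa [Real.dist_eq, abs_of_nonneg γ.len_nonneg] using this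
      rw [← sub_mul, abs_mul, abs_of_pos (show 0 < 2 / r by positivity), mul_comm]
      gcongr
      have := abs_dist_sub_le (γ.toFun γ.len) (γ.toFun 0) x
      rw [dist_comm (γ.toFun γ.len) (γ.toFun 0)] at this
      refine le_trans (le_of_eq ?_) (this.trans hdist)
      congr 1; ring
    · refine ⟨(closedBall x (3 * r / 2))ᶜ, isClosed_closedBall.isOpen_compl, ?_, 1, one_pos,
        fun γ hγ _ => ?_⟩
      · simp only [mem_compl_iff, mem_closedBall]; linarith
      · unfold UGIneq
        have : ∀ t ∈ Icc 0 γ.len, clamp ((3 * r / 2 - dist (γ.toFun t) x) * (2 / r)) = 0 := by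
          intro t ht
          have := (hγ t ht).1
          simp only [mem_compl_iff, mem_closedBall, not_le] at this
          apply clamp_of_le
          apply mul_nonpos_of_nonpos_of_nonneg (by linarith) (by positivity)
        simp only []
        rw [this 0 (left_mem_Icc.2 γ.len_nonneg), this _ (right_mem_Icc.2 γ.len_nonneg)]
        simp
  · rw [lintegral_indicator measurableSet_ball, add_mul]
    gcongr
    · rw [one_mul, ← lintegral_indicator_one measurableSet_ball]
      apply lintegral_mono
      intro y
      by_cases hy : y ∈ ball x (2 * r)
      · rw [indicator_of_mem hy]
        exact ENNReal.ofReal_le_one.2 (clamp_mem _).2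
      · simp only [mem_ball, not_lt] at hy
        have : clamp ((3 * r / 2 - dist y x) * (2 / r)) = 0 :=
          clamp_of_le (mul_nonpos_of_nonpos_of_nonneg (by linarith) (by positivity))
        simp [this]
    · simp

/-- Vitali covering lemma giving capacity bound -/
lemma capLe_vitali {μ : Measure X} {D : ℝ≥0} (h : DB μ D) [SecondCountableTopology X] {a : ℝ}
    (ha : 1 ≤ a) :
    ∃ C : ℝ≥0, ∀ (ν : Measure X) (Y : Set X) (W : Set X) (M : ℝ≥0∞), MeasurableSet W →
      (∀ y ∈ Y, ∃ r : ℝ, 0 < r ∧ r ≤ 1 ∧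
        μ (ball y r) ≤ ENNReal.ofReal r * (M * ν (closedBall y (a * r) ∩ W))) →
      ∃ G : Set X, IsOpen G ∧ Y ⊆ G ∧ CapLe μ G (C * M * ν W) := by
  obtain ⟨k, hk⟩ := pow_unbounded_of_one_lt (10 * a) (one_lt_two)
  refine ⟨2 * D ^ k, fun ν Y W M hW hY => ?_⟩
  choose! r hr hr1 hrM using hY
  obtain ⟨u, huY, hdis, hcov⟩ := Vitali.exists_disjoint_subfamily_covering_enlargement_closedBall Y
    (fun y => y) (fun y => a * r y) a (fun y hy => mul_le_of_le_one_right (by linarith) (hr1 y hy))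
    4 (by norm_num)
  have hucount : u.Countable := by
    apply hdis.countable_of_nonempty_interior
    intro y hy
    refine ⟨y, ball_subset_interior_closedBall (mem_ball_self ?_)⟩
    have := hr y (huY hy)
    positivity
  have : Countable u := hucount.to_subtype
  refine ⟨⋃ y : u, ball (y : X) (5 * a * r y), isOpen_iUnion fun _ => isOpen_ball, ?_, ?_⟩
  · intro y hy
    obtain ⟨b, hb, hbb⟩ := hcov y hy
    refine mem_iUnion.2 ⟨⟨b, hb⟩, ?_⟩
    have := hr y hy
    have h2 := hbb (mem_closedBall_self (by positivity))
    rw [mem_closedBall] at h2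
    rw [mem_ball]
    have h3 : 0 < a * r b := by have := hr b (huY hb); positivity
    show dist y b < 5 * a * r b
    linarith
  · refine (CapLe.iUnion (a := fun y : u => (2 * D ^ k : ℝ≥0) * M *
      ν (closedBall (y : X) (a * r y) ∩ W)) fun y => ?_).mono ?_
    · have hry := hr y (huY y.2)
      refine (capLe_ball μ _ (by positivity)).mono ?_
      have h1 : 1 + ENNReal.ofReal (2 / (5 * a * r y)) ≤ 2 * ENNReal.ofReal (1 / r y) := by
        rw [two_mul]
        refine add_le_add ?_ (ENNReal.ofReal_le_ofReal ?_)
        · rw [← ENNReal.ofReal_one]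
          apply ENNReal.ofReal_le_ofReal
          rw [le_div_iff₀ hry]; linarith [hr1 y (huY y.2)]
        · rw [div_le_div_iff₀ (by positivity) hry]
          nlinarith
      have h2 : μ (ball (y : X) (2 * (5 * a * r y))) ≤ D ^ k * μ (ball (y : X) (r y)) := by
        apply h.ball_le k hry
        rw [dist_self]
        nlinarith
      calc _ ≤ 2 * ENNReal.ofReal (1 / r y) * (D ^ k * (ENNReal.ofReal (r y) *
            (M * ν (closedBall y (a * r y) ∩ W)))) := by
            gcongr
            exact h2.trans (by gcongr; exact hrM y (huY y.2))
        _ = (ENNReal.ofReal (1 / r y) * ENNReal.ofReal (r y)) * (2 * D ^ k * M *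
            ν (closedBall y (a * r y) ∩ W)) := by ring
        _ = _ := by
            rw [← ENNReal.ofReal_mul (by positivity), one_div, inv_mul_cancel₀ hry.ne']
            simp
    · rw [ENNReal.tsum_mul_left]
      gcongr
      rw [← measure_iUnion]
      · apply measure_mono
        simp
      · intro x y hxy
        have := hdis x.2 y.2 (fun h => hxy (Subtype.ext h))
        exact this.mono inter_subset_left inter_subset_left
      · intro y
        exact measurableSet_closedBall.inter hW

/-! ### Admissible pairs and the Poincare inequality -/

structure Adm (Ω : Set X) (v : X → ℝ) (g : X → ℝ≥0∞) : Prop where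
  vm : Measurable v
  v01 : ∀ x, v x ∈ Icc (0 : ℝ) 1
  gm : Measurable g
  ug : UGOn Ω v g

/-- characteristic function -/
def chi (E : Set X) : X → ℝ := E.indicator fun _ => (1 : ℝ)

lemma chi_meas {E : Set X} (hE : MeasurableSet E) : Measurable (chi E) :=
  measurable_const.indicator hE

lemma chi_of_mem {E : Set X} {x : X} (h : x ∈ E) : chi E x = 1 := indicator_of_mem h _
lemma chi_of_notMem {E : Set X} {x : X} (h : x ∉ E) : chi E x = 0 := indicator_of_notMem h _
lemma chi_mem (E : Set X) (x : X) : chi E x ∈ Icc (0 : ℝ) 1 := by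
  by_cases h : x ∈ E
  · rw [chi_of_mem h]; simp
  · rw [chi_of_notMem h]; simp

lemma chi_abs (a b : ℝ) (ha : a ∈ Icc (0 : ℝ) 1) (hb : b ∈ Icc (0 : ℝ) 1) : |a - b| ≤ 1 := by
  rw [abs_le]; constructor <;> linarith [ha.1, ha.2, hb.1, hb.2]

def FinPer (μ : Measure X) (E Ω : Set X) (T : ℝ≥0∞) : Prop :=
  ∀ δ : ℝ≥0∞, 0 < δ → ∃ v g, Adm Ω v g ∧
    (∫⁻ x in Ω, ENNReal.ofReal |v x - chi E x| ∂μ) ≤ δ ∧ (∫⁻ x in Ω, g x ∂μ) ≤ T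

lemma curve_leave {γ : Curve X} {K : Set X} (hK : IsClosed K) (hγ : ¬ γ.In K) (hl : 0 < γ.len)
    {g : X → ℝ≥0∞} (hg : ∀ x ∉ K, g x = ∞) : γ.integral g = ∞ := by
  unfold Curve.In at hγ
  push Not at hγ
  obtain ⟨t0, ht0, hK0⟩ := hγ
  have h1 : ∀ᶠ t in 𝓝[Icc 0 γ.len] t0, γ.toFun t ∈ Kᶜ :=
    (γ.continuousOn t0 ht0).eventually (hK.isOpen_compl.mem_nhds hK0)
  rw [Filter.Eventually, Metric.mem_nhdsWithin_iff] at h1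
  obtain ⟨δ, hδ, h2⟩ := h1
  set J := Icc (max 0 (t0 - δ / 2)) (min γ.len (t0 + δ / 2)) with hJ
  have hJs : J ⊆ Icc 0 γ.len := Icc_subset_Icc (le_max_left _ _) (min_le_left _ _)
  have hJv : volume J ≠ 0 := by
    rw [hJ, Real.volume_Icc]
    simp only [ne_eq, ENNReal.ofReal_eq_zero, not_le, sub_pos, max_lt_iff, lt_min_iff]
    refine ⟨⟨hl, ?_⟩, ?_, ?_⟩ <;> linarith [ht0.1, ht0.2]
  have h3 : ∫⁻ t in J, g (γ.toFun t) = ∞ := by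
    rw [setLIntegral_congr_fun (g := fun _ => ∞) measurableSet_Icc]
    · rw [setLIntegral_const]; exact ENNReal.top_mul hJv
    · intro t ht
      apply hg
      apply h2
      refine ⟨?_, hJs ht⟩
      rw [mem_ball, Real.dist_eq, abs_lt]
      have h4 := (le_max_right _ _).trans ht.1
      have h5 := ht.2.trans (min_le_right _ _)
      constructor <;> linarith
  unfold Curve.integral
  exact top_le_iff.1 (h3 ▸ lintegral_mono_set hJs)

lemma poin_adm {μ : Measure X} {D : ℝ≥0} (hdb : DB μ D) {CP lam : ℝ} (hP : Poincare μ CP lam)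
    {Ω : Set X} {v : X → ℝ} {g : X → ℝ≥0∞} (h : Adm Ω v g) {x : X} {r : ℝ} (hr : 0 < r)
    (hsub : closedBall x (lam * r) ⊆ Ω) :
    ∃ m : ℝ, (∫⁻ y in ball x r, ENNReal.ofReal |v y - m| ∂μ) ≤
      ENNReal.ofReal (CP * r) * ∫⁻ y in closedBall x (lam * r), g y ∂μ := by
  classical
  set K := closedBall x (lam * r) with hK
  have hUG : IsUpperGradient v (fun y => if y ∈ K then g y else ∞) := by
    refine ⟨Measurable.ite measurableSet_closedBall h.gm measurable_const, fun γ => ?_⟩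
    by_cases hγ : γ.In K
    · refine (h.ug γ (hγ.mono hsub)).trans (Curve.integral_mono hγ ?_)
      intro y hy
      simp [hy]
    · rcases γ.len_nonneg.eq_or_lt with hl | hl
      · unfold UGIneq
        rw [← hl]; simp
      · unfold UGIneq
        rw [curve_leave (K := K) isClosed_closedBall hγ hl]
        · exact le_top
        · intro y hy; simp [hy]
  have hL1 : MemL1Loc μ univ v := by
    refine ⟨h.vm.aemeasurable, fun y _ => ⟨1, one_pos, ?_⟩⟩
    calc _ ≤ ∫⁻ _ in univ ∩ ball y 1, 1 ∂μ := by
          apply lintegral_mono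
          intro z
          simp only [ENNReal.ofReal_le_one]
          rw [abs_of_nonneg (h.v01 z).1]
          exact (h.v01 z).2
      _ = μ (ball y 1) := by simp
      _ < ∞ := hdb.fin _ _
  have key := hP.2.2 x r hr v _ hL1 hUG
  have hl1 := hP.2.1
  set m := ⨍ z in ball x r, v z ∂μ
  refine ⟨m, ?_⟩
  have hint : IntegrableOn (fun y => |v y - m|) (ball x r) μ := by
    have : IsFiniteMeasure (μ.restrict (ball x r)) := ⟨by simpa using hdb.fin x r⟩
    refine Integrable.of_bound (C := 1 + |m|) ?_ (ae_of_all _ fun y => ?_)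
    · exact (h.vm.sub_const m).abs.aestronglyMeasurable
    · rw [Real.norm_eq_abs, abs_abs]
      refine (abs_sub _ _).trans ?_
      gcongr
      rw [abs_of_nonneg (h.v01 y).1]
      exact (h.v01 y).2
  rw [ofReal_setAverage hint (ae_of_all _ fun y => abs_nonneg _)] at key
  have hb0 := (hdb.pos x r hr).ne'
  have hbf := (hdb.fin x r).ne
  rw [ENNReal.div_le_iff hb0 hbf] at key
  refine key.trans ?_
  rw [mul_assoc]
  gcongr
  have hsm : ball x r ⊆ ball x (lam * r) := ball_subset_ball (by nlinarith)
  have hint2 : ∫⁻ y in ball x (lam * r), (if y ∈ K then g y else ∞) ∂μ ≤ ∫⁻ y in K, g y ∂μ := by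
    calc _ ≤ ∫⁻ y in K, (if y ∈ K then g y else ∞) ∂μ := lintegral_mono_set ball_subset_closedBall
      _ = _ := setLIntegral_congr_fun measurableSet_closedBall (fun y hy => by simp [hy])
  have hpos : 0 < lam * r := by nlinarith
  calc _ ≤ (∫⁻ y in K, g y ∂μ) / μ (ball x (lam * r)) * μ (ball x (lam * r)) := by gcongr
    _ = _ := ENNReal.div_mul_cancel (hdb.pos _ _ hpos).ne' (hdb.fin _ _).ne

lemma poin_half {μ : Measure X} {D : ℝ≥0} (hdb : DB μ D) {CP lam : ℝ} (hP : Poincare μ CP lam)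
    {Ω : Set X} {v : X → ℝ} {g : X → ℝ≥0∞} (h : Adm Ω v g) {x : X} {r : ℝ} (hr : 0 < r)
    (hsub : closedBall x (lam * r) ⊆ Ω) {E : Set X} (hE : MeasurableSet E)
    (hhalf : μ (ball x r ∩ E) ≤ μ (ball x r \ E)) :
    μ (ball x r ∩ E) ≤ ENNReal.ofReal (CP * r) * (∫⁻ y in closedBall x (lam * r), g y ∂μ) +
      ∫⁻ x in Ω, ENNReal.ofReal |v x - chi E x| ∂μ := by
  obtain ⟨m, hm⟩ := poin_adm hdb hP h hr hsub
  have hl1 := hP.2.1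
  have h1 : μ (ball x r ∩ E) ≤ ∫⁻ y in ball x r, ENNReal.ofReal |chi E y - m| ∂μ := by
    rw [← lintegral_inter_add_sdiff _ _ hE]
    rw [setLIntegral_congr_fun (g := fun _ => ENNReal.ofReal |1 - m|) (measurableSet_ball.inter hE)
      (fun y hy => by simp only [chi_of_mem hy.2])]
    rw [setLIntegral_congr_fun (g := fun _ => ENNReal.ofReal |m|) (measurableSet_ball.diff hE)
      (fun y hy => by simp only [chi_of_notMem hy.2, zero_sub, abs_neg])]
    rw [setLIntegral_const, setLIntegral_const]
    calc μ (ball x r ∩ E) = 1 * μ (ball x r ∩ E) := (one_mul _).symm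
      _ ≤ (ENNReal.ofReal |1 - m| + ENNReal.ofReal |m|) * μ (ball x r ∩ E) := by
          gcongr
          rw [← ENNReal.ofReal_add (abs_nonneg _) (abs_nonneg _), ← ENNReal.ofReal_one]
          apply ENNReal.ofReal_le_ofReal
          calc (1 : ℝ) = |(1 - m) + m| := by simp
            _ ≤ _ := abs_add_le _ _
      _ ≤ _ := by rw [add_mul]; gcongr
  refine h1.trans ?_
  have h2 : ∫⁻ y in ball x r, ENNReal.ofReal |chi E y - m| ∂μ ≤
      ∫⁻ y in ball x r, (ENNReal.ofReal |v y - m| + ENNReal.ofReal |v y - chi E y|) ∂μ := by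
    apply lintegral_mono
    intro y
    have := ofReal_abs_tri (chi E y) (v y) m
    rw [abs_sub_comm (chi E y) (v y), add_comm] at this
    exact this
  refine h2.trans ?_
  rw [lintegral_add_left (by exact (h.vm.sub_const m).abs.ennreal_ofReal)]
  refine add_le_add hm (lintegral_mono_set (Subset.trans ?_ hsub))
  exact (ball_subset_ball (by nlinarith)).trans ball_subset_closedBall

/-! ### Weak limits and the perimeter measure -/

lemma weak_lim {K : Set X} (hK : IsCompact K) (C : ℝ≥0) (μs : ℕ → Measure X)
    (hm : ∀ i, μs i univ ≤ C) (hs : ∀ i, μs i Kᶜ = 0) :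
    ∃ (ν : Measure X) (U : Filter ℕ), ν univ ≤ C ∧ U.NeBot ∧ U ≤ atTop ∧
      (∀ F : Set X, IsClosed F → ∀ ε : ℝ≥0∞, ε ≠ 0 → ∀ᶠ i in U, μs i F ≤ ν F + ε) ∧
      (∀ V : Set X, IsOpen V → ∀ ε : ℝ≥0∞, ε ≠ 0 → ∀ᶠ i in U, ν V ≤ μs i V + ε) := by
  have hfin : ∀ i, IsFiniteMeasure (μs i) := fun i => ⟨(hm i).trans_lt ENNReal.coe_lt_top⟩
  let P : ℕ → FiniteMeasure X := fun i => ⟨μs i, hfin i⟩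
  let U : Ultrafilter ℕ := hyperfilter ℕ
  have hc := isCompact_setOfPred_finiteMeasure_le_of_isCompact C hK
  rw [isCompact_iff_ultrafilter_le_nhds] at hc
  obtain ⟨ν, ⟨hν1, hν2⟩, hν3⟩ := hc (U.map P) (by
    rw [le_principal_iff]
    change ∀ᶠ i in (U : Filter ℕ), P i ∈ _
    refine Eventually.of_forall fun i => ⟨?_, ?_⟩
    · have : ((P i).mass : ℝ≥0∞) ≤ C := by rw [FiniteMeasure.ennreal_mass]; exact hm i
      exact_mod_cast this
    · have : ((P i Kᶜ : ℝ≥0) : ℝ≥0∞) = 0 := by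
        rw [FiniteMeasure.ennreal_coeFn_eq_coeFn_toMeasure]; exact hs i
      exact_mod_cast this)
  have ht : Tendsto P U (𝓝 ν) := hν3
  have hclosed : ∀ F : Set X, IsClosed F → ∀ ε : ℝ≥0∞, ε ≠ 0 →
      ∀ᶠ i in (U : Filter ℕ), μs i F ≤ (ν : Measure X) F + ε := by
    intro F hF ε hε
    have h1 := FiniteMeasure.limsup_measure_closed_le_of_tendsto ht hF
    have h2 := eventually_lt_of_limsup_lt (h1.trans_lt
      (ENNReal.lt_add_right (measure_ne_top _ F) hε))
    exact h2.mono fun i hi => hi.le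
  refine ⟨ν, U, ?_, inferInstance, (hyperfilter_le_cofinite).trans Nat.cofinite_eq_atTop.le,
    hclosed, ?_⟩
  · rw [← FiniteMeasure.ennreal_mass]
    exact_mod_cast hν1
  · intro V hV ε hε
    have hmass : Tendsto (fun i => μs i univ) U (𝓝 ((ν : Measure X) univ)) := by
      have := (FiniteMeasure.continuous_mass.tendsto ν).comp ht
      have := ENNReal.tendsto_coe.2 this
      simp only [Function.comp_def, FiniteMeasure.ennreal_mass] at this
      exact this
    have hε2 : ε / 2 ≠ 0 := (ENNReal.half_pos hε).ne'
    have e1 : ∀ᶠ i in (U : Filter ℕ), (ν : Measure X) univ ≤ μs i univ + ε / 2 := by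
      rcases eq_or_ne ((ν : Measure X) univ) 0 with h0 | h0
      · rw [h0]; exact Eventually.of_forall fun _ => zero_le
      · have := (tendsto_order.1 hmass).1 ((ν : Measure X) univ - ε / 2)
          (ENNReal.sub_lt_self (measure_ne_top _ _) h0 hε2)
        exact this.mono fun i hi => tsub_le_iff_right.1 hi.le
    filter_upwards [e1, hclosed _ hV.isClosed_compl _ hε2] with i h1 h2
    rw [← measure_add_measure_compl hV.measurableSet,
      ← measure_add_measure_compl hV.measurableSet] at h1
    have hne : (ν : Measure X) Vᶜ ≠ ∞ := measure_ne_top _ _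
    have : (ν : Measure X) V + (ν : Measure X) Vᶜ ≤ (μs i V + ε) + (ν : Measure X) Vᶜ := by
      calc _ ≤ μs i V + μs i Vᶜ + ε / 2 := h1
        _ ≤ μs i V + ((ν : Measure X) Vᶜ + ε / 2) + ε / 2 := by gcongr
        _ = μs i V + (ε / 2 + ε / 2) + (ν : Measure X) Vᶜ := by ring
        _ = _ := by rw [ENNReal.add_halves]
    exact (ENNReal.add_le_add_iff_right hne).1 this

/-- cut-off function -/
def cutψ (F : Set X) (r : ℝ) (y : X) : ℝ := clamp ((8 / r) * (infDist y F - 3 * r / 4))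

open Classical in
def cutG (F : Set X) (r : ℝ) (v : X → ℝ) (g : X → ℝ≥0∞) (y : X) : ℝ≥0∞ :=
  if infDist y F ≤ r / 2 then 0 else if infDist y F < r then
    2 * g y + ENNReal.ofReal (8 / r) * ENNReal.ofReal (v y) else g y

lemma cut_adm {Ω : Set X} {v : X → ℝ} {g : X → ℝ≥0∞} (h : Adm Ω v g) (F : Set X) {r : ℝ}
    (hr : 0 < r) : Adm Ω (fun y => v y * cutψ F r y) (cutG F r v g) := by
  have hd : Continuous fun y => infDist y F := continuous_infDist_pt F
  have hψ : ∀ y, cutψ F r y ∈ Icc (0 : ℝ) 1 := fun y => clamp_mem _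
  have h8 : 0 < 8 / r := by positivity
  refine ⟨?_, ?_, ?_, ?_⟩
  · exact h.vm.mul (clamp_cont.comp (by fun_prop : Continuous fun y =>
      (8 / r) * (infDist y F - 3 * r / 4))).measurable
  · intro y
    exact ⟨mul_nonneg (h.v01 y).1 (hψ y).1, mul_le_one₀ (h.v01 y).2 (hψ y).1 (hψ y).2⟩
  · unfold cutG
    refine Measurable.ite (measurableSet_le hd.measurable measurable_const) measurable_const ?_
    refine Measurable.ite (measurableSet_lt hd.measurable measurable_const) ?_ h.gm
    exact (h.gm.const_mul 2).add (h.vm.ennreal_ofReal.const_mul _)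
  · apply ugOn_of_local
    intro x hx
    rcases lt_or_ge (infDist x F) (3 * r / 4) with h1 | h1
    · refine ⟨{y | infDist y F < 3 * r / 4}, isOpen_lt hd continuous_const, h1, 1, one_pos,
        fun γ hγ _ => ?_⟩
      have : ∀ t ∈ Icc 0 γ.len, cutψ F r (γ.toFun t) = 0 := by
        intro t ht
        have : infDist (γ.toFun t) F < 3 * r / 4 := (hγ t ht).1
        exact clamp_of_le (mul_nonpos_of_nonneg_of_nonpos h8.le (by linarith))
      unfold UGIneq
      simp only []
      rw [this 0 (left_mem_Icc.2 γ.len_nonneg), this _ (right_mem_Icc.2 γ.len_nonneg)]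
      simp
    rcases lt_or_ge (7 * r / 8) (infDist x F) with h2 | h2
    · refine ⟨{y | 7 * r / 8 < infDist y F}, isOpen_lt continuous_const hd, h2, 1, one_pos,
        fun γ hγ _ => ?_⟩
      have : ∀ t ∈ Icc 0 γ.len, cutψ F r (γ.toFun t) = 1 := by
        intro t ht
        have : 7 * r / 8 < infDist (γ.toFun t) F := (hγ t ht).1
        apply clamp_of_ge
        calc (1 : ℝ) = 8 / r * (r / 8) := by field_simp
          _ ≤ _ := by gcongr; linarith
      unfold UGIneq
      simp only []
      rw [this 0 (left_mem_Icc.2 γ.len_nonneg), this _ (right_mem_Icc.2 γ.len_nonneg), mul_one,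
        mul_one]
      refine (h.ug γ (hγ.mono inter_subset_right)).trans (Curve.integral_mono hγ ?_)
      rintro y ⟨hy, -⟩
      simp only [mem_ofPred_eq] at hy
      unfold cutG
      rw [if_neg (by linarith)]
      split_ifs
      · rw [two_mul, add_assoc]; exact le_self_add
      · exact le_rfl
    · refine ⟨{y | r / 2 < infDist y F} ∩ {y | infDist y F < r},
        (isOpen_lt continuous_const hd).inter (isOpen_lt hd continuous_const),
        ⟨?_, ?_⟩, r / 8, by positivity, fun γ hγ hl => ?_⟩
      · simp only [mem_ofPred_eq]; linarith
      · simp only [mem_ofPred_eq]; linarith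
      · have := ug_prod h.gm h.v01 hψ h.ug h8 (fun y z => by
          refine (clamp_lip _ _).trans ?_
          rw [← mul_sub, abs_mul, abs_of_pos h8]
          gcongr
          have := (lipschitz_infDist_pt F).dist_le_mul y z
          rw [Real.dist_eq] at this
          simpa using this) (hγ.mono inter_subset_right) (by simpa using hl)
        refine le_trans this (Curve.integral_mono hγ ?_)
        rintro y ⟨⟨hy1, hy2⟩, -⟩
        simp only [mem_ofPred_eq] at hy1 hy2
        unfold cutG
        rw [if_neg (by linarith), if_pos hy2]

lemma cut_dist {v : X → ℝ} (hv : ∀ x, v x ∈ Icc (0 : ℝ) 1) (E F : Set X) {r : ℝ}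
    (hr : 0 < r) (y : X) : ENNReal.ofReal |v y * cutψ F r y - chi E y| ≤
      ENNReal.ofReal |v y - chi E y| + (E ∩ {y | infDist y F < r}).indicator 1 y := by
  have hψ : cutψ F r y ∈ Icc (0 : ℝ) 1 := clamp_mem _
  rcases lt_or_ge (infDist y F) r with h | h
  · by_cases hE : y ∈ E
    · rw [indicator_of_mem (by exact ⟨hE, h⟩)]
      refine le_trans ?_ le_add_self
      simp only [Pi.one_apply, ENNReal.ofReal_le_one]
      exact chi_abs _ _ ⟨mul_nonneg (hv y).1 hψ.1, mul_le_one₀ (hv y).2 hψ.1 hψ.2⟩ (chi_mem _ _)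
    · refine le_trans ?_ le_self_add
      apply ENNReal.ofReal_le_ofReal
      rw [chi_of_notMem hE, sub_zero, sub_zero, abs_mul, abs_of_nonneg hψ.1]
      exact mul_le_of_le_one_right (abs_nonneg _) hψ.2
  · have : cutψ F r y = 1 := by
      apply clamp_of_ge
      calc (1 : ℝ) = 8 / r * (r / 8) := by field_simp
          _ ≤ _ := by gcongr; linarith
    rw [this, mul_one]
    exact le_self_add

lemma cut_pt {v : X → ℝ} (g : X → ℝ≥0∞) (F : Set X) (r : ℝ) (y : X) :
    cutG F r v g y + {y | infDist y F < r / 2}.indicator g y ≤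
      g y + {y | r / 2 ≤ infDist y F ∧ infDist y F ≤ r}.indicator g y +
        ENNReal.ofReal (8 / r) *
          {y | infDist y F < r}.indicator (fun y => ENNReal.ofReal (v y)) y := by
  unfold cutG
  by_cases h1 : infDist y F ≤ r / 2
  · rw [if_pos h1, zero_add]
    exact (indicator_le_self _ _ _).trans (le_self_add.trans le_self_add)
  · rw [if_neg h1, indicator_of_notMem (by simp only [mem_ofPred_eq]; linarith), add_zero]
    by_cases h2 : infDist y F < r
    · rw [if_pos h2, indicator_of_mem (by exact ⟨by linarith, h2.le⟩), indicator_of_mem (by exact h2),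
        two_mul]
    · rw [if_neg h2]
      exact le_self_add.trans le_self_add

structure PMeas (μ : Measure X) (E Ω : Set X) (CP lam : ℝ) (T : ℝ≥0∞) (ν : Measure X) : Prop where
  fin : ν univ ≤ T
  pi : ∀ (x : X) (r : ℝ), 0 < r → closedBall x (lam * r) ⊆ Ω →
    μ (ball x r ∩ E) ≤ μ (ball x r \ E) →
    μ (ball x r ∩ E) ≤ ENNReal.ofReal (CP * r) * ν (closedBall x (lam * r))
  cut : ∃ (m : ℕ → ℝ≥0∞) (T0 : ℝ≥0∞), T0 < ∞ ∧ T0 = ⨆ j, m j ∧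
    ∀ (F : Set X) (r : ℝ) (j : ℕ), F.Nonempty → 0 < r →
      μ.restrict Ω (E ∩ {y | infDist y F < r}) < ((j : ℝ≥0∞) + 1)⁻¹ →
      ν F + m j ≤ T0 + ν {y | r / 2 ≤ infDist y F ∧ infDist y F ≤ r} +
        ENNReal.ofReal (8 / r) * μ.restrict Ω (E ∩ {y | infDist y F < r})

lemma tendsto_e : Tendsto (fun i : ℕ => ((i : ℝ≥0∞) + 1)⁻¹) atTop (𝓝 0) := by
  have := (tendsto_add_atTop_iff_nat 1).2 ENNReal.tendsto_inv_nat_nhds_zero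
  simpa using this

lemma exists_nu {μ : Measure X} {D : ℝ≥0} (hdb : DB μ D) {CP lam : ℝ} (hP : Poincare μ CP lam)
    [ProperSpace X] {E : Set X} (hE : MeasurableSet E) {x0 : X} {R : ℝ} {T : ℝ≥0∞} (hT : T < ∞)
    (h : FinPer μ E (ball x0 R) T) : ∃ ν, PMeas μ E (ball x0 R) CP lam T ν := by
  set Ω := ball x0 R with hΩ
  let m : ℕ → ℝ≥0∞ := fun j => ⨅ (v : X → ℝ) (g : X → ℝ≥0∞) (_ : Adm Ω v g)
    (_ : (∫⁻ x in Ω, ENNReal.ofReal |v x - chi E x| ∂μ) ≤ ((j : ℝ≥0∞) + 1)⁻¹), ∫⁻ x in Ω, g x ∂μ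
  have hm : ∀ (j : ℕ) v g, Adm Ω v g → (∫⁻ x in Ω, ENNReal.ofReal |v x - chi E x| ∂μ) ≤
      ((j : ℝ≥0∞) + 1)⁻¹ → m j ≤ ∫⁻ x in Ω, g x ∂μ := fun j v g h1 h2 =>
    iInf_le_of_le v (iInf_le_of_le g (iInf_le_of_le h1 (iInf_le_of_le h2 le_rfl)))
  have hpos : ∀ j : ℕ, 0 < ((j : ℝ≥0∞) + 1)⁻¹ := fun j => by simp
  set T0 := ⨆ j, m j with hT0
  have hT0T : T0 ≤ T := by
    apply iSup_le
    intro j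
    obtain ⟨v, g, h1, h2, h3⟩ := h _ (hpos j)
    exact (hm j v g h1 h2).trans h3
  have hT0f : T0 < ∞ := hT0T.trans_lt hT
  have hex : ∀ i : ℕ, ∃ v g, Adm Ω v g ∧ (∫⁻ x in Ω, ENNReal.ofReal |v x - chi E x| ∂μ) ≤
      ((i : ℝ≥0∞) + 1)⁻¹ ∧ ∫⁻ x in Ω, g x ∂μ ≤ T0 + ((i : ℝ≥0∞) + 1)⁻¹ := by
    intro i
    have h1 : m i < T0 + ((i : ℝ≥0∞) + 1)⁻¹ :=
      (le_iSup m i).trans_lt (ENNReal.lt_add_right hT0f.ne (hpos i).ne')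
    simp only [m, iInf_lt_iff] at h1
    obtain ⟨v, g, h1, h2, h3⟩ := h1
    exact ⟨v, g, h1, h2, h3.le⟩
  choose v g hA hv hg using hex
  let μs : ℕ → Measure X := fun i => (μ.restrict Ω).withDensity (g i)
  have hμs : ∀ i A, MeasurableSet A → μs i A = ∫⁻ x in Ω, A.indicator (g i) x ∂μ := by
    intro i A hA'
    rw [lintegral_indicator hA', ← withDensity_apply _ hA']
  have he1 : ∀ i : ℕ, ((i : ℝ≥0∞) + 1)⁻¹ ≤ 1 := fun i => by
    rw [ENNReal.inv_le_one]; exact le_add_self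
  have hμu : ∀ i, μs i univ ≤ T0 + ((i : ℝ≥0∞) + 1)⁻¹ := by
    intro i
    rw [hμs i _ MeasurableSet.univ, indicator_univ]; exact hg i
  obtain ⟨ν, U, -, hU1, hU2, hcl, hop⟩ := weak_lim (isCompact_closedBall x0 R)
    (T0 + 1).toNNReal μs (fun i => by
      rw [ENNReal.coe_toNNReal (by finiteness)]
      exact (hμu i).trans (by gcongr; exact he1 i)) (fun i => by
      rw [hμs i _ isClosed_closedBall.measurableSet.compl]
      rw [setLIntegral_congr_fun (g := fun _ => 0) measurableSet_ball]
      · simp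
      · intro y hy
        exact indicator_of_notMem (notMem_compl_iff.2 (ball_subset_closedBall hy)) _)
  have he : Tendsto (fun i : ℕ => ((i : ℝ≥0∞) + 1)⁻¹) U (𝓝 0) := tendsto_e.mono_left hU2
  refine ⟨ν, ?_, ?_, m, T0, hT0f, rfl, ?_⟩
  · refine le_trans ?_ hT0T
    apply ENNReal.le_of_forall_pos_le_add
    intro ε hε _
    have hlim : Tendsto (fun i : ℕ => T0 + ((i : ℝ≥0∞) + 1)⁻¹ + ε) U (𝓝 (T0 + 0 + ε)) :=
      (he.const_add T0).add_const _
    rw [add_zero] at hlim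
    refine ge_of_tendsto hlim ?_
    filter_upwards [hop univ isOpen_univ ε (by exact_mod_cast hε.ne')] with i hi
    exact hi.trans (by gcongr; exact hμu i)
  · intro x r hr hsub hhalf
    have hc : ENNReal.ofReal (CP * r) ≠ ∞ := ENNReal.ofReal_ne_top
    have key : ∀ ε : ℝ≥0∞, ε ≠ 0 → μ (ball x r ∩ E) ≤
        ENNReal.ofReal (CP * r) * (ν (closedBall x (lam * r)) + ε) := by
      intro ε hε
      have hlim : Tendsto (fun i : ℕ => ENNReal.ofReal (CP * r) *
          (ν (closedBall x (lam * r)) + ε) + ((i : ℝ≥0∞) + 1)⁻¹) U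
          (𝓝 (ENNReal.ofReal (CP * r) * (ν (closedBall x (lam * r)) + ε) + 0)) :=
        he.const_add _
      rw [add_zero] at hlim
      refine ge_of_tendsto hlim ?_
      filter_upwards [hcl _ (isClosed_closedBall (x := x) (ε := lam * r)) ε hε] with i hi
      refine (poin_half hdb hP (hA i) hr hsub hE hhalf).trans (add_le_add ?_ (hv i))
      gcongr
      refine le_trans (le_of_eq ?_) hi
      rw [withDensity_apply _ measurableSet_closedBall,
        Measure.restrict_restrict measurableSet_closedBall, inter_eq_self_of_subset_left hsub]
    have hlim : Tendsto (fun i : ℕ => ENNReal.ofReal (CP * r) *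
        (ν (closedBall x (lam * r)) + ((i : ℝ≥0∞) + 1)⁻¹)) U
        (𝓝 (ENNReal.ofReal (CP * r) * (ν (closedBall x (lam * r)) + 0))) :=
      ENNReal.Tendsto.const_mul (he.const_add _) (Or.inr hc)
    rw [add_zero] at hlim
    exact ge_of_tendsto hlim (Eventually.of_forall fun i => key _ (hpos i).ne')
  · intro F r j hF hr hs
    have hd : Continuous fun y => infDist y F := continuous_infDist_pt F
    set N := {y | infDist y F < r} with hN
    set V := {y | infDist y F < r / 2} with hV
    set Q := {y | r / 2 ≤ infDist y F ∧ infDist y F ≤ r} with hQ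
    have hNm : MeasurableSet N := (isOpen_lt hd continuous_const).measurableSet
    have hVo : IsOpen V := isOpen_lt hd continuous_const
    have hQc : IsClosed Q := (isClosed_le continuous_const hd).inter (isClosed_le hd continuous_const)
    set s := μ.restrict Ω (E ∩ N) with hsdef
    set c := ENNReal.ofReal (8 / r) with hcdef
    have hc : c ≠ ∞ := ENNReal.ofReal_ne_top
    have hsint : ∫⁻ y in Ω, (E ∩ N).indicator 1 y ∂μ = s := lintegral_indicator_one (hE.inter hNm)
    have hmain : ∀ i : ℕ, s + ((i : ℝ≥0∞) + 1)⁻¹ ≤ ((j : ℝ≥0∞) + 1)⁻¹ →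
        m j + μs i V ≤ T0 + ((i : ℝ≥0∞) + 1)⁻¹ + μs i Q + c * (((i : ℝ≥0∞) + 1)⁻¹ + s) := by
      intro i hi
      have hdm : Measurable fun y => ENNReal.ofReal |v i y - chi E y| :=
        ((hA i).vm.sub (chi_meas hE)).abs.ennreal_ofReal
      have h1 : m j ≤ ∫⁻ y in Ω, cutG F r (v i) (g i) y ∂μ := by
        apply hm j _ _ (cut_adm (hA i) F hr)
        calc _ ≤ ∫⁻ y in Ω, (ENNReal.ofReal |v i y - chi E y| + (E ∩ N).indicator 1 y) ∂μ :=
              lintegral_mono fun y => cut_dist (hA i).v01 E F hr y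
          _ ≤ ((i : ℝ≥0∞) + 1)⁻¹ + s := by
              rw [lintegral_add_left hdm, hsint]; gcongr; exact hv i
          _ ≤ _ := by rw [add_comm]; exact hi
      have h2 : ∫⁻ y in Ω, N.indicator (fun y => ENNReal.ofReal (v i y)) y ∂μ ≤
          ((i : ℝ≥0∞) + 1)⁻¹ + s := by
        calc _ ≤ ∫⁻ y in Ω, (ENNReal.ofReal |v i y - chi E y| + (E ∩ N).indicator 1 y) ∂μ := by
              apply lintegral_mono
              intro y
              by_cases hy : y ∈ N
              · simp only [indicator_of_mem hy]
                by_cases hyE : y ∈ E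
                · rw [indicator_of_mem (mem_inter hyE hy)]
                  exact le_trans (ENNReal.ofReal_le_one.2 ((hA i).v01 y).2) le_add_self
                · rw [chi_of_notMem hyE, sub_zero, abs_of_nonneg ((hA i).v01 y).1]
                  exact le_self_add
              · simp only [indicator_of_notMem hy]; exact zero_le
          _ ≤ ((i : ℝ≥0∞) + 1)⁻¹ + s := by
              rw [lintegral_add_left hdm, hsint]; gcongr; exact hv i
      calc m j + μs i V ≤ (∫⁻ y in Ω, cutG F r (v i) (g i) y ∂μ) +
            ∫⁻ y in Ω, V.indicator (g i) y ∂μ := by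
            gcongr; exact (hμs i V hVo.measurableSet).le
        _ = ∫⁻ y in Ω, (cutG F r (v i) (g i) y + V.indicator (g i) y) ∂μ := by
            rw [lintegral_add_left (cut_adm (hA i) F hr).gm]
        _ ≤ ∫⁻ y in Ω, (g i y + Q.indicator (g i) y + c *
              N.indicator (fun y => ENNReal.ofReal (v i y)) y) ∂μ :=
            lintegral_mono fun y => cut_pt (g i) F r y
        _ = (∫⁻ y in Ω, g i y ∂μ) + (∫⁻ y in Ω, Q.indicator (g i) y ∂μ) + c *
              ∫⁻ y in Ω, N.indicator (fun y => ENNReal.ofReal (v i y)) y ∂μ := by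
            rw [lintegral_add_left (f := fun y => g i y + Q.indicator (g i) y)
                ((hA i).gm.add ((hA i).gm.indicator hQc.measurableSet)),
              lintegral_add_left (hA i).gm,
              lintegral_const_mul _ ((hA i).vm.ennreal_ofReal.indicator hNm)]
        _ ≤ _ := by
            rw [hμs i Q hQc.measurableSet]
            gcongr
            exact hg i
    have hev : ∀ᶠ i : ℕ in U, s + ((i : ℝ≥0∞) + 1)⁻¹ ≤ ((j : ℝ≥0∞) + 1)⁻¹ := by
      have h1 : Tendsto (fun i : ℕ => s + ((i : ℝ≥0∞) + 1)⁻¹) U (𝓝 (s + 0)) := he.const_add s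
      rw [add_zero] at h1
      exact ((tendsto_order.1 h1).2 _ hs).mono fun i hi => hi.le
    have key : ∀ ε : ℝ≥0∞, ε ≠ 0 → ν F + m j ≤ T0 + (ν Q + ε) + c * s + ε := by
      intro ε hε
      have hlim : Tendsto (fun i : ℕ => T0 + ((i : ℝ≥0∞) + 1)⁻¹ + (ν Q + ε) +
          c * (((i : ℝ≥0∞) + 1)⁻¹ + s) + ε) U (𝓝 (T0 + 0 + (ν Q + ε) + c * (0 + s) + ε)) := by
        refine Tendsto.add_const _ ((Tendsto.add_const _ (he.const_add _)).add ?_)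
        exact ENNReal.Tendsto.const_mul (he.add_const _) (Or.inr hc)
      rw [add_zero, zero_add] at hlim
      refine ge_of_tendsto hlim ?_
      filter_upwards [hev, hcl Q hQc ε hε, hop V hVo ε hε] with i h1 h2 h3
      calc ν F + m j ≤ ν V + m j := by
            gcongr
            intro y hy
            simp only [hV, mem_ofPred_eq, infDist_zero_of_mem hy]
            positivity
        _ ≤ (μs i V + ε) + m j := by gcongr
        _ = (m j + μs i V) + ε := by ring
        _ ≤ (T0 + ((i : ℝ≥0∞) + 1)⁻¹ + μs i Q + c * (((i : ℝ≥0∞) + 1)⁻¹ + s)) + ε := by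
            exact add_le_add (hmain i h1) le_rfl
        _ ≤ _ := by gcongr
    have hlim : Tendsto (fun i : ℕ => T0 + (ν Q + ((i : ℝ≥0∞) + 1)⁻¹) + c * s +
        ((i : ℝ≥0∞) + 1)⁻¹) U (𝓝 (T0 + (ν Q + 0) + c * s + 0)) :=
      Tendsto.add (Tendsto.add_const _ ((he.const_add _).const_add _)) he
    rw [add_zero, add_zero] at hlim
    exact ge_of_tendsto hlim (Eventually.of_forall fun i => key _ (hpos i).ne')

/-! ### Removal lemma -/

lemma half_of {μ : Measure X} {D : ℝ≥0} (hdb : DB μ D) {E : Set X} (hE : MeasurableSet E) {x : X}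
    {r : ℝ} {γ : ℝ≥0∞} (hγ : γ ≤ 2⁻¹) (h : μ (ball x r ∩ E) ≤ γ * μ (ball x r)) :
    μ (ball x r ∩ E) ≤ μ (ball x r \ E) := by
  have h1 := measure_inter_add_sdiff (μ := μ) (ball x r) hE
  have hf := (hdb.fin x r).ne
  have hf1 : μ (ball x r ∩ E) ≠ ∞ := ne_top_of_le_ne_top hf (measure_mono inter_subset_left)
  have h2 : μ (ball x r ∩ E) + μ (ball x r ∩ E) ≤ μ (ball x r ∩ E) + μ (ball x r \ E) := by
    rw [h1]
    calc _ ≤ 2⁻¹ * μ (ball x r) + 2⁻¹ * μ (ball x r) := by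
          gcongr <;> exact h.trans (by gcongr)
      _ = μ (ball x r) := by rw [← add_mul, ENNReal.inv_two_add_inv_two, one_mul]
  exact (ENNReal.add_le_add_iff_left hf1).1 h2

lemma coe_pow_ofReal (D : ℝ≥0) (k : ℕ) : (D : ℝ≥0∞) ^ k = ENNReal.ofReal ((D : ℝ) ^ k) := by
  rw [ENNReal.ofReal_pow (NNReal.coe_nonneg D), ENNReal.ofReal_coe_nnreal]

lemma removal {μ : Measure X} {D : ℝ≥0} (hdb : DB μ D) {CP lam : ℝ} (hP : Poincare μ CP lam)
    [ProperSpace X] : ∃ γ0 : ℝ≥0, 0 < γ0 ∧ γ0 ≤ 2⁻¹ ∧ ∀ (E : Set X) (Ω : Set X) (T : ℝ≥0∞)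
      (ν : Measure X), MeasurableSet E → IsOpen Ω → T < ∞ → PMeas μ E Ω CP lam T ν →
      ∀ (F : Set X) (R : ℝ), IsCompact F → F ⊆ Ω → 0 < R →
      (∀ y ∈ F, ∀ ρ : ℝ, 0 < ρ → ρ < R → μ (ball y ρ ∩ E) ≤ γ0 * μ (ball y ρ)) → ν F = 0 := by
  have hCP := hP.1
  have hlam := hP.2.1
  have hD : (1 : ℝ) ≤ D := by exact_mod_cast hdb.one
  obtain ⟨k', hk'⟩ := pow_unbounded_of_one_lt (4 * lam + 2) (one_lt_two)
  obtain ⟨k, hk⟩ := pow_unbounded_of_one_lt (max lam (16 * CP * (D : ℝ) ^ k')) (one_lt_two)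
  have hk1 : lam < 2 ^ k := (le_max_left _ _).trans_lt hk
  have hk2 : 16 * CP * (D : ℝ) ^ k' < 2 ^ k := (le_max_right _ _).trans_lt hk
  set θ : ℝ := (2 ^ k)⁻¹ with hθ
  have hθ0 : 0 < θ := by positivity
  have hθk : 2 ^ k * θ = 1 := mul_inv_cancel₀ (by positivity)
  have hθlam : lam * θ ≤ 1 := by rw [← hθk]; gcongr
  have hθ1 : θ ≤ 1 := by nlinarith
  have hθ16 : 16 * CP * (D : ℝ) ^ k' * θ ≤ 1 := by rw [← hθk]; gcongr
  have hDk : (1 : ℝ≥0) ≤ D ^ (k + 2) := one_le_pow₀ hdb.one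
  refine ⟨(2 * D ^ (k + 2))⁻¹, by positivity, ?_, ?_⟩
  · gcongr
    exact le_mul_of_one_le_right zero_le hDk
  intro E Ω T ν hE hΩ hT hν F R hF hFΩ hR hdens
  have hνfin : IsFiniteMeasure ν := ⟨hν.fin.trans_lt hT⟩
  rcases F.eq_empty_or_nonempty with rfl | hFn
  · simp
  obtain ⟨δ, hδ, hδΩ⟩ := hF.exists_cthickening_subset_open hΩ hFΩ
  have hγD : (((2 * D ^ (k + 2))⁻¹ : ℝ≥0) : ℝ≥0∞) * D ^ (k + 2) = 2⁻¹ := by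
    have : ((2 * D ^ (k + 2))⁻¹ : ℝ≥0) * D ^ (k + 2) = 2⁻¹ := by
      have : (D : ℝ≥0) ^ (k + 2) ≠ 0 := by positivity
      field_simp
    have h2 := congrArg (fun z : ℝ≥0 => (z : ℝ≥0∞)) this
    simpa using h2
  -- main estimate
  have hmain : ∀ r : ℝ, 0 < r → 2 * r < R → 2 * r ≤ δ →
      μ (E ∩ {y | infDist y F < r}) ≤ ENNReal.ofReal (r / 16) * ν (cthickening (2 * r) F) := by
    intro r hr hrR hrδ
    set N := {y | infDist y F < r} with hN
    have hNF : ∀ c ∈ N, ∃ y ∈ F, dist c y < r := fun c hc => (infDist_lt_iff hFn).1 hc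
    obtain ⟨y0, hy0⟩ := hFn
    obtain ⟨M, hM⟩ := hF.isBounded.subset_closedBall y0
    have hNb : N ⊆ closedBall y0 (M + r) := by
      intro c hc
      obtain ⟨y, hy, hcy⟩ := hNF c hc
      have := hM hy
      rw [mem_closedBall] at this ⊢
      linarith [dist_triangle c y y0]
    set ρ := θ * r with hρ
    have hρ0 : 0 < ρ := by positivity
    have hρr : ρ ≤ r := by nlinarith
    have hlρ : lam * ρ ≤ r := by rw [hρ, ← mul_assoc]; nlinarith
    obtain ⟨S, hS1, hS2, hS3⟩ := hdb.net hρ0 hNb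
    have hsub : ∀ c ∈ S, closedBall c (lam * ρ) ⊆ cthickening (2 * r) F := by
      intro c hc z hz
      obtain ⟨y, hy, hcy⟩ := hNF c (hS1 c hc)
      rw [mem_closedBall] at hz
      refine mem_cthickening_of_dist_le z y _ F hy ?_
      linarith [dist_triangle z c y]
    have hball : ∀ c ∈ S, μ (ball c ρ ∩ E) ≤ ENNReal.ofReal (CP * ρ) *
        ν (closedBall c (lam * ρ)) := by
      intro c hc
      obtain ⟨y, hy, hcy⟩ := hNF c (hS1 c hc)
      refine hν.pi c ρ hρ0 ((hsub c hc).trans ((cthickening_mono hrδ F).trans hδΩ)) ?_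
      apply half_of hdb hE le_rfl
      calc μ (ball c ρ ∩ E) ≤ μ (ball y (2 * r) ∩ E) := by
            gcongr
            exact ball_subset_ball' (by linarith)
        _ ≤ _ := hdens y hy (2 * r) (by positivity) hrR
        _ ≤ (((2 * D ^ (k + 2))⁻¹ : ℝ≥0) : ℝ≥0∞) * (D ^ (k + 2) * μ (ball c ρ)) := by
            gcongr
            apply hdb.ball_le (k + 2) hρ0
            rw [hρ, pow_add, dist_comm]
            have : (2 : ℝ) ^ k * 2 ^ 2 * (θ * r) = 4 * r := by
              rw [show (2 : ℝ) ^ k * 2 ^ 2 * (θ * r) = (2 ^ k * θ) * (4 * r) by ring, hθk, one_mul]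
            rw [this]; linarith
        _ = _ := by rw [← mul_assoc, hγD]
    have hover : ∑ c ∈ S, ν (closedBall c (lam * ρ)) ≤ D ^ k' * ν (cthickening (2 * r) F) := by
      classical
      have h1 : ∑ c ∈ S, ν (closedBall c (lam * ρ)) =
          ∫⁻ z, ∑ c ∈ S, (closedBall c (lam * ρ)).indicator 1 z ∂ν := by
        rw [lintegral_finsetSum]
        · exact Finset.sum_congr rfl fun c _ =>
            (lintegral_indicator_one measurableSet_closedBall).symm
        · intro c _
          exact measurable_one.indicator measurableSet_closedBall
      have h2 : ∀ z, ∑ c ∈ S, (closedBall c (lam * ρ)).indicator (1 : X → ℝ≥0∞) z ≤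
          (cthickening (2 * r) F).indicator (fun _ => (D : ℝ≥0∞) ^ k') z := by
        intro z
        have h3 : ∑ c ∈ S, (closedBall c (lam * ρ)).indicator (1 : X → ℝ≥0∞) z =
            ((S.filter fun c => z ∈ closedBall c (lam * ρ)).card : ℝ≥0∞) := by
          simp only [indicator, Pi.one_apply]
          rw [Finset.sum_boole]
        by_cases hz : z ∈ cthickening (2 * r) F
        · rw [h3, indicator_of_mem hz]
          refine hdb.packing k' (y := z) (R := lam * ρ) hρ0 _ ?_ ?_ ?_
          · intro c hc
            rw [dist_comm]
            exact mem_closedBall.1 (Finset.mem_filter.1 hc).2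
          · intro c hc d hd
            exact hS2 c (Finset.mem_filter.1 hc).1 d (Finset.mem_filter.1 hd).1
          · nlinarith
        · rw [indicator_of_notMem hz]
          refine le_of_eq (Finset.sum_eq_zero fun c hc => ?_)
          exact indicator_of_notMem (fun h => hz (hsub c hc h)) _
      rw [h1]
      refine (lintegral_mono h2).trans ?_
      rw [lintegral_indicator isClosed_cthickening.measurableSet, setLIntegral_const]
    have hcover : E ∩ N ⊆ ⋃ c ∈ S, (ball c ρ ∩ E) := by
      rintro y ⟨hyE, hyN⟩
      obtain ⟨c, hc, hcy⟩ := hS3 y hyN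
      exact mem_iUnion₂.2 ⟨c, hc, hcy, hyE⟩
    calc μ (E ∩ N) ≤ ∑ c ∈ S, μ (ball c ρ ∩ E) :=
          (measure_mono hcover).trans (measure_biUnion_finset_le _ _)
      _ ≤ ∑ c ∈ S, ENNReal.ofReal (CP * ρ) * ν (closedBall c (lam * ρ)) := Finset.sum_le_sum hball
      _ = ENNReal.ofReal (CP * ρ) * ∑ c ∈ S, ν (closedBall c (lam * ρ)) := by rw [Finset.mul_sum]
      _ ≤ ENNReal.ofReal (CP * ρ) * (D ^ k' * ν (cthickening (2 * r) F)) := by gcongr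
      _ = ENNReal.ofReal (CP * ρ * (D : ℝ) ^ k') * ν (cthickening (2 * r) F) := by
          rw [coe_pow_ofReal, ← mul_assoc, ← ENNReal.ofReal_mul (by positivity)]
      _ ≤ _ := by
          gcongr
          rw [hρ]
          nlinarith
  obtain ⟨m, T0, hT0, hT0m, hcut⟩ := hν.cut
  have hstep : ∀ j, 2 * ν F + m j ≤ T0 + (1 + 2⁻¹) * ν F := by
    intro j
    have hlim : Tendsto (fun r : ℝ => T0 + (1 + 2⁻¹) * ν (cthickening (2 * r) F)) (𝓝[>] 0)
        (𝓝 (T0 + (1 + 2⁻¹) * ν F)) := by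
      refine Tendsto.const_add _ (ENNReal.Tendsto.const_mul ?_ (Or.inr (by simp)))
      refine (tendsto_measure_cthickening_of_isCompact hF).comp ?_
      have : Tendsto (fun r : ℝ => 2 * r) (𝓝 0) (𝓝 (2 * 0)) := by
        exact (continuous_const.mul continuous_id).tendsto 0
      rw [mul_zero] at this
      exact this.mono_left nhdsWithin_le_nhds
    have hsm : Tendsto (fun r : ℝ => ENNReal.ofReal (r / 16) * ν univ) (𝓝[>] 0) (𝓝 0) := by
      have h1 : Tendsto (fun r : ℝ => ENNReal.ofReal (r / 16)) (𝓝 0) (𝓝 (ENNReal.ofReal (0 / 16))) :=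
        (ENNReal.continuous_ofReal.comp (by fun_prop)).tendsto 0
      rw [zero_div, ENNReal.ofReal_zero] at h1
      have h2 := ENNReal.Tendsto.mul_const (b := ν univ) h1 (Or.inr (measure_ne_top _ _))
      rw [zero_mul] at h2
      exact h2.mono_left nhdsWithin_le_nhds
    refine ge_of_tendsto hlim ?_
    have ej : ∀ᶠ r : ℝ in 𝓝[>] 0, ENNReal.ofReal (r / 16) * ν univ < ((j : ℝ≥0∞) + 1)⁻¹ :=
      (tendsto_order.1 hsm).2 _ (by simp)
    have e1 : ∀ᶠ r : ℝ in 𝓝[>] 0, r < R / 2 := by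
      filter_upwards [Ioo_mem_nhdsGT (show (0 : ℝ) < R / 2 by positivity)] with r hr using hr.2
    have e2 : ∀ᶠ r : ℝ in 𝓝[>] 0, r < δ / 2 := by
      filter_upwards [Ioo_mem_nhdsGT (show (0 : ℝ) < δ / 2 by positivity)] with r hr using hr.2
    filter_upwards [ej, e1, e2, self_mem_nhdsWithin] with r h1 h2 h3 h4
    have hr : 0 < r := h4
    have hs := hmain r hr (by linarith) (by linarith)
    have hsr : μ.restrict Ω (E ∩ {y | infDist y F < r}) ≤
        ENNReal.ofReal (r / 16) * ν (cthickening (2 * r) F) :=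
      (Measure.restrict_apply_le _ _).trans hs
    have hc := hcut F r j hFn hr (lt_of_le_of_lt (hsr.trans (by gcongr; exact subset_univ _)) h1)
    set Q := {y | r / 2 ≤ infDist y F ∧ infDist y F ≤ r} with hQ
    have hd : Continuous fun y => infDist y F := continuous_infDist_pt F
    have hQF : ν F + ν Q ≤ ν (cthickening (2 * r) F) := by
      have hQm : MeasurableSet Q :=
        ((isClosed_le continuous_const hd).inter (isClosed_le hd continuous_const)).measurableSet
      have hdj : Disjoint F Q := by
        rw [Set.disjoint_left]
        rintro y hy ⟨hy', -⟩
        rw [infDist_zero_of_mem hy] at hy'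
        linarith
      rw [← measure_union hdj hQm]
      · apply measure_mono
        apply union_subset (self_subset_cthickening F)
        rintro y ⟨-, hy⟩
        obtain ⟨z, hz, hyz⟩ := (infDist_lt_iff (r := 2 * r) hFn).1 (lt_of_le_of_lt hy (by linarith))
        exact mem_cthickening_of_dist_le y z _ F hz hyz.le
    calc 2 * ν F + m j = ν F + (ν F + m j) := by ring
      _ ≤ ν F + (T0 + ν Q + ENNReal.ofReal (8 / r) *
            (ENNReal.ofReal (r / 16) * ν (cthickening (2 * r) F))) := by
          exact add_le_add le_rfl (hc.trans (by gcongr))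
      _ = T0 + (ν F + ν Q) + ENNReal.ofReal (8 / r * (r / 16)) * ν (cthickening (2 * r) F) := by
          rw [ENNReal.ofReal_mul (by positivity)]; ring
      _ ≤ T0 + ν (cthickening (2 * r) F) + 2⁻¹ * ν (cthickening (2 * r) F) := by
          gcongr
          rw [show 8 / r * (r / 16) = (2 : ℝ)⁻¹ by field_simp; norm_num,
            ENNReal.ofReal_inv_of_pos two_pos]
          simp
      _ = _ := by ring
  have hfin : 2 * ν F + T0 ≤ T0 + (1 + 2⁻¹) * ν F := by
    conv_lhs => rw [hT0m]
    rw [ENNReal.add_iSup]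
    exact iSup_le hstep
  rw [add_comm, ENNReal.add_le_add_iff_left hT0.ne] at hfin
  have h2 : (2 : ℝ≥0∞) * ν F = (1 + 2⁻¹) * ν F + 2⁻¹ * ν F := by
    rw [← add_mul, add_assoc, ENNReal.inv_two_add_inv_two]; norm_num
  rw [h2] at hfin
  have h3 : (1 + 2⁻¹) * ν F ≠ ∞ := ENNReal.mul_ne_top (by simp) (measure_ne_top _ _)
  have h4 : 2⁻¹ * ν F ≤ 0 := by
    rw [← ENNReal.add_le_add_iff_left h3, add_zero]; exact hfin
  simpa using h4

/-! ### Core covering results -/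

/-- Points of `B` with small density at all scales below `R`. -/
def AR (μ : Measure X) (E : Set X) (γ : ℝ≥0) (B : Set X) (R : ℝ) : Set X :=
  {y | y ∈ B ∧ ∀ ρ : ℝ, 0 < ρ → ρ < R → μ (ball y ρ ∩ E) ≤ γ * μ (ball y ρ)}

lemma core_const {μ : Measure X} {D : ℝ≥0} (hdb : DB μ D) {CP lam : ℝ} (hP : Poincare μ CP lam)
    [ProperSpace X] : ∃ γ : ℝ≥0, 0 < γ ∧ γ ≤ 2⁻¹ ∧ ∀ (E : Set X) (x0 : X) (n : ℝ) (T : ℝ≥0∞)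
      (ν : Measure X), MeasurableSet E → T < ∞ → PMeas μ E (ball x0 (n + 1)) CP lam T ν →
      ν (⋃ m : ℕ, closure (AR μ E γ (ball x0 n) (1 / ((m : ℝ) + 1)))) = 0 := by
  obtain ⟨γ0, h0, h2, hrem⟩ := removal hdb hP
  have hD : 0 < D := lt_of_lt_of_le one_pos hdb.one
  refine ⟨γ0 / D ^ 2, by positivity, ?_, ?_⟩
  · exact (div_le_self zero_le (one_le_pow₀ hdb.one)).trans h2
  intro E x0 n T ν hE hT hν
  rw [measure_iUnion_null_iff]
  intro m
  set R : ℝ := 1 / ((m : ℝ) + 1) with hR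
  have hR0 : 0 < R := by positivity
  have hsub : closure (AR μ E (γ0 / D ^ 2) (ball x0 n) R) ⊆ closedBall x0 n :=
    (closure_mono (fun y hy => hy.1)).trans closure_ball_subset_closedBall
  refine hrem E _ T ν hE isOpen_ball hT hν _ (R / 2) ?_ ?_ (by positivity) ?_
  · exact (isCompact_closedBall x0 n).of_isClosed_subset isClosed_closure hsub
  · exact hsub.trans (closedBall_subset_ball (by linarith))
  intro y hy ρ hρ hρR
  obtain ⟨y', hy', hd⟩ := Metric.mem_closure_iff.1 hy ρ hρ
  calc μ (ball y ρ ∩ E) ≤ μ (ball y' (2 * ρ) ∩ E) := by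
        gcongr
        exact ball_subset_ball' (by linarith)
    _ ≤ ((γ0 / D ^ 2 : ℝ≥0) : ℝ≥0∞) * μ (ball y' (2 * ρ)) := hy'.2 _ (by positivity) (by linarith)
    _ ≤ ((γ0 / D ^ 2 : ℝ≥0) : ℝ≥0∞) * (D ^ 2 * μ (ball y ρ)) := by
        gcongr
        apply hdb.ball_le 2 hρ
        rw [dist_comm]; linarith
    _ = _ := by
        rw [← mul_assoc]
        congr 1
        norm_cast
        field_simp

lemma cover_N {μ : Measure X} {D : ℝ≥0} (hdb : DB μ D) {CP lam : ℝ} (hP : Poincare μ CP lam)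
    [ProperSpace X] {γ : ℝ≥0} (hγ : γ ≤ 2⁻¹) {E : Set X} {x0 : X} {n : ℝ} {T : ℝ≥0∞}
    {ν : Measure X} (hE : MeasurableSet E) (hT : T < ∞)
    (hν : PMeas μ E (ball x0 (n + 1)) CP lam T ν)
    (hz : ν (⋃ m : ℕ, closure (AR μ E γ (ball x0 n) (1 / ((m : ℝ) + 1)))) = 0)
    {ε : ℝ≥0∞} (hε : 0 < ε) : ∃ G, IsOpen G ∧ CapLe μ G ε ∧
      ∀ (m : ℕ), ∀ y ∈ AR μ E γ (ball x0 n) (1 / ((m : ℝ) + 1)), y ∉ mExterior μ E → y ∈ G := by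
  have hCP := hP.1
  have hlam := hP.2.1
  have hνfin : IsFiniteMeasure ν := ⟨hν.fin.trans_lt hT⟩
  have hγ' : (γ : ℝ≥0∞) ≤ 2⁻¹ := by
    have : ((2⁻¹ : ℝ≥0) : ℝ≥0∞) = 2⁻¹ := by simp
    rw [← this]; exact_mod_cast hγ
  obtain ⟨C, hC⟩ := capLe_vitali hdb hlam
  obtain ⟨e, he0, hes⟩ := ENNReal.exists_pos_sum_of_countable' hε.ne' ℕ
  have hk : ∀ k : ℕ, ∃ G, IsOpen G ∧ CapLe μ G (e k) ∧
      ∀ (m : ℕ), ∀ y ∈ AR μ E γ (ball x0 n) (1 / ((m : ℝ) + 1)),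
        (∃ᶠ r in 𝓝[>] (0 : ℝ), μ (ball y r) ≤ k * μ (ball y r ∩ E)) → y ∈ G := by
    intro k
    set M : ℝ≥0∞ := k * ENNReal.ofReal CP with hM
    have hMt : C * M ≠ ∞ := by
      rw [hM]
      exact ENNReal.mul_ne_top ENNReal.coe_ne_top
        (ENNReal.mul_ne_top (ENNReal.natCast_ne_top k) ENNReal.ofReal_ne_top)
    have hδ : 0 < e k / (C * M) := ENNReal.div_pos (he0 k).ne' hMt
    obtain ⟨U, hUs, hUo, hUν⟩ := Set.exists_isOpen_lt_of_lt _ (e k / (C * M)) (hz ▸ hδ)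
    obtain ⟨G, hG, hYG, hcap⟩ := hC ν {y | ∃ m : ℕ, y ∈ AR μ E γ (ball x0 n) (1 / ((m : ℝ) + 1)) ∧
      ∃ᶠ r in 𝓝[>] (0 : ℝ), μ (ball y r) ≤ k * μ (ball y r ∩ E)} U M hUo.measurableSet (by
        rintro y ⟨m, hy, hf⟩
        have hyU : y ∈ U := hUs (mem_iUnion.2 ⟨m, subset_closure hy⟩)
        obtain ⟨s, hs, hsU⟩ := Metric.isOpen_iff.1 hUo y hyU
        have hev : ∀ᶠ r : ℝ in 𝓝[>] 0, 0 < r ∧ r < 1 / ((m : ℝ) + 1) ∧ r < s / lam ∧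
            r < 1 / lam := by
          have h1 : (0 : ℝ) < 1 / ((m : ℝ) + 1) := by positivity
          have h2 : 0 < s / lam := by positivity
          have h3 : 0 < 1 / lam := by positivity
          filter_upwards [Ioo_mem_nhdsGT h1, Ioo_mem_nhdsGT h2, Ioo_mem_nhdsGT h3] with r a b c
          exact ⟨a.1, a.2, b.2, c.2⟩
        obtain ⟨r, hr, hr0, hrm, hrs, hrl⟩ := (hf.and_eventually hev).exists
        have hl0 : 0 < lam := by linarith
        rw [lt_div_iff₀ hl0] at hrs hrl
        have hsub : closedBall y (lam * r) ⊆ ball x0 (n + 1) := by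
          have := mem_ball.1 hy.1
          intro z hz
          rw [mem_closedBall] at hz
          rw [mem_ball]
          linarith [dist_triangle z y x0]
        have hpi := hν.pi y r hr0 hsub (half_of hdb hE hγ' (hy.2 r hr0 hrm))
        refine ⟨r, hr0, by nlinarith, ?_⟩
        have hUc : closedBall y (lam * r) ∩ U = closedBall y (lam * r) :=
          inter_eq_left.2 ((closedBall_subset_ball (by linarith)).trans hsU)
        rw [hUc]
        calc μ (ball y r) ≤ k * μ (ball y r ∩ E) := hr
          _ ≤ k * (ENNReal.ofReal (CP * r) * ν (closedBall y (lam * r))) := by gcongr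
          _ = _ := by rw [hM, ENNReal.ofReal_mul (by linarith)]; ring)
    refine ⟨G, hG, hcap.mono ?_, fun m y hy hf => hYG ⟨m, hy, hf⟩⟩
    calc C * M * ν U ≤ C * M * (e k / (C * M)) := by gcongr
      _ ≤ e k := ENNReal.mul_div_le
  choose G hGo hGc hGm using hk
  refine ⟨⋃ k, G k, isOpen_iUnion hGo, (CapLe.iUnion hGc).mono hes.le, ?_⟩
  intro m y hy hyE
  have h1 : ¬ ∀ ε > 0, ∀ᶠ r in 𝓝[>] (0 : ℝ), μ (ball y r ∩ E) / μ (ball y r) ≤ ε := by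
    intro h
    exact hyE (ENNReal.tendsto_nhds_zero.2 h)
  push Not at h1
  obtain ⟨c, hc, hf⟩ := h1
  obtain ⟨k, hk⟩ := ENNReal.exists_inv_nat_lt hc.ne'
  refine mem_iUnion.2 ⟨k, hGm k m y hy ?_⟩
  refine (hf.and_eventually self_mem_nhdsWithin).mono ?_
  rintro r ⟨hr, hr0⟩
  have hr0 : 0 < r := hr0
  have h3 : (k : ℝ≥0∞)⁻¹ * μ (ball y r) ≤ μ (ball y r ∩ E) := by
    rw [← ENNReal.le_div_iff_mul_le (Or.inl (hdb.pos y r hr0).ne') (Or.inl (hdb.fin y r).ne)]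
    exact (hk.trans hr).le
  have hk0 : (k : ℝ≥0∞) ≠ 0 := by
    intro h
    rw [h, ENNReal.inv_zero] at hk
    exact not_top_lt hk
  calc μ (ball y r) = k * ((k : ℝ≥0∞)⁻¹ * μ (ball y r)) := by
        rw [← mul_assoc, ENNReal.mul_inv_cancel hk0 (ENNReal.natCast_ne_top k), one_mul]
    _ ≤ _ := by gcongr

lemma boxing {μ : Measure X} {D : ℝ≥0} (hdb : DB μ D) {CP lam : ℝ} (hP : Poincare μ CP lam)
    {γ β κ : ℝ≥0} (hγ : γ ≤ 2⁻¹) (hβ : β * D ≤ γ) (hκ : CP * κ ≤ β) {E Ω : Set X}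
    {T : ℝ≥0∞} {ν : Measure X} (hE : MeasurableSet E)
    (hν : PMeas μ E Ω CP lam T ν) {y : X} {ρ : ℝ} (hρ : 0 < ρ)
    (hΩ : closedBall y (lam * ρ) ⊆ Ω) (h0 : μ (ball y ρ ∩ E) ≤ β * μ (ball y ρ))
    (hr : ∀ r, 0 < r → r ≤ ρ → ENNReal.ofReal r * ν (closedBall y (lam * r)) ≤ κ * μ (ball y r)) :
    ∀ r, 0 < r → r ≤ ρ → μ (ball y r ∩ E) ≤ γ * μ (ball y r) := by
  have hCP := hP.1
  have hlam := hP.2.1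
  have hγ' : (γ : ℝ≥0∞) ≤ 2⁻¹ := by
    have : ((2⁻¹ : ℝ≥0) : ℝ≥0∞) = 2⁻¹ := by simp
    rw [← this]; exact_mod_cast hγ
  have hκ' : ENNReal.ofReal CP * κ ≤ β := by
    rw [← ENNReal.ofReal_coe_nnreal (p := κ), ← ENNReal.ofReal_mul (by linarith),
      ← ENNReal.ofReal_coe_nnreal (p := β)]
    exact ENNReal.ofReal_le_ofReal hκ
  have hβγ : β ≤ γ := (le_mul_of_one_le_right zero_le hdb.one).trans hβ
  have imp : ∀ r, 0 < r → r ≤ ρ → μ (ball y r ∩ E) ≤ γ * μ (ball y r) →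
      μ (ball y r ∩ E) ≤ β * μ (ball y r) := by
    intro r h1 h2 h3
    have hsub : closedBall y (lam * r) ⊆ Ω :=
      (closedBall_subset_closedBall (by gcongr)).trans hΩ
    calc μ (ball y r ∩ E) ≤ ENNReal.ofReal (CP * r) * ν (closedBall y (lam * r)) :=
          hν.pi y r h1 hsub (half_of hdb hE hγ' h3)
      _ = ENNReal.ofReal CP * (ENNReal.ofReal r * ν (closedBall y (lam * r))) := by
          rw [ENNReal.ofReal_mul (by linarith), mul_assoc]
      _ ≤ ENNReal.ofReal CP * (κ * μ (ball y r)) := mul_le_mul_right (hr r h1 h2) _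
      _ = (ENNReal.ofReal CP * κ) * μ (ball y r) := by rw [mul_assoc]
      _ ≤ _ := by gcongr
  have step : ∀ r s, 0 < r → r ≤ s → s ≤ 2 * r → μ (ball y s ∩ E) ≤ β * μ (ball y s) →
      μ (ball y r ∩ E) ≤ γ * μ (ball y r) := by
    intro r s h1 h2 h3 h4
    calc μ (ball y r ∩ E) ≤ μ (ball y s ∩ E) := by
          gcongr
      _ ≤ β * μ (ball y s) := h4
      _ ≤ β * (D ^ 1 * μ (ball y r)) := by
          gcongr
          apply hdb.ball_le 1 h1
          rw [dist_self]; linarith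
      _ = ((β * D : ℝ≥0) : ℝ≥0∞) * μ (ball y r) := by push_cast; rw [pow_one, mul_assoc]
      _ ≤ _ := by gcongr
  have ind : ∀ (j : ℕ) (r : ℝ), 0 < r → r ≤ ρ → ρ ≤ 2 ^ j * r →
      μ (ball y r ∩ E) ≤ γ * μ (ball y r) := by
    intro j
    induction j with
    | zero =>
      intro r h1 h2 h3
      have : r = ρ := le_antisymm h2 (by simpa using h3)
      rw [this]
      exact h0.trans (by gcongr)
    | succ j ih =>
      intro r h1 h2 h3
      by_cases h4 : 2 * r ≤ ρ
      · exact step r (2 * r) h1 (by linarith) le_rfl (imp _ (by positivity) h4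
          (ih _ (by positivity) h4 (by rw [pow_succ] at h3; linarith)))
      · exact step r ρ h1 h2 (by linarith) h0
  intro r h1 h2
  obtain ⟨j, hj⟩ := pow_unbounded_of_one_lt (ρ / r) (one_lt_two)
  refine ind j r h1 h2 ?_
  rw [div_lt_iff₀ h1] at hj
  exact hj.le

theorem core {μ : Measure X} {D : ℝ≥0} (hdb : DB μ D) {CP lam : ℝ} (hP : Poincare μ CP lam)
    [ProperSpace X] : ∃ β C : ℝ≥0, 0 < β ∧ ∀ (E : Set X) (x0 : X) (n : ℝ) (T : ℝ≥0∞),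
      MeasurableSet E → T < ∞ → FinPer μ E (ball x0 (n + 1)) T →
      (∀ ε : ℝ≥0∞, 0 < ε → ∃ G, IsOpen G ∧ CapLe μ G ε ∧
        ∀ x ∈ ball x0 n, x ∈ mExterior μ E → x ∉ G →
          ∃ ρ : ℝ, 0 < ρ ∧ ∀ y ∈ ball x ρ, y ∉ G → y ∈ mExterior μ E) ∧
      ((∀ y ∈ ball x0 n, μ (ball y lam⁻¹ ∩ E) ≤ β * μ (ball y lam⁻¹)) →
        ∀ ε : ℝ≥0∞, 0 < ε → ∃ G, IsOpen G ∧ CapLe μ G (C * T + ε) ∧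
          ∀ x ∈ ball x0 n, x ∉ G → x ∈ mExterior μ E) := by
  have hCP := hP.1
  have hlam := hP.2.1
  obtain ⟨γ, hγ0, hγ, hnull⟩ := core_const hdb hP
  obtain ⟨C, hC⟩ := capLe_vitali hdb hlam
  have hD : 0 < D := lt_of_lt_of_le one_pos hdb.one
  set β : ℝ≥0 := γ / D with hβdef
  have hβ0 : 0 < β := by positivity
  have hβ : β * D ≤ γ := by rw [hβdef, div_mul_cancel₀ _ hD.ne']
  set κ : ℝ≥0 := β / CP.toNNReal with hκdef
  have hCP0 : 0 < CP.toNNReal := Real.toNNReal_pos.2 (by linarith)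
  have hκ0 : 0 < κ := by positivity
  have hκ : CP * κ ≤ β := by
    have h1 : CP.toNNReal * κ = β := by rw [hκdef, mul_div_cancel₀ _ hCP0.ne']
    rw [← h1]; push_cast
    rw [Real.coe_toNNReal CP (by linarith)]
  refine ⟨β, C * κ⁻¹, hβ0, ?_⟩
  intro E x0 n T hE hT hFP
  obtain ⟨ν, hν⟩ := exists_nu hdb hP hE hT hFP
  have hz := hnull E x0 n T ν hE hT hν
  have hνfin : IsFiniteMeasure ν := ⟨hν.fin.trans_lt hT⟩
  have hGW : ∀ W : Set X, MeasurableSet W → ∃ G, IsOpen G ∧ CapLe μ G (C * (κ⁻¹ : ℝ≥0) * ν W) ∧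
      ∀ y, y ∉ G → ∀ r : ℝ, 0 < r → r ≤ 1 →
        ENNReal.ofReal r * ν (closedBall y (lam * r) ∩ W) ≤ κ * μ (ball y r) := by
    intro W hW
    obtain ⟨G, hG, hYG, hcap⟩ := hC ν {y | ∃ r : ℝ, 0 < r ∧ r ≤ 1 ∧
      κ * μ (ball y r) < ENNReal.ofReal r * ν (closedBall y (lam * r) ∩ W)} W (κ⁻¹ : ℝ≥0) hW (by
        rintro y ⟨r, h1, h2, h3⟩
        refine ⟨r, h1, h2, ?_⟩
        calc μ (ball y r) = ((κ⁻¹ : ℝ≥0) : ℝ≥0∞) * (κ * μ (ball y r)) := by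
              rw [← mul_assoc, ← ENNReal.coe_mul, inv_mul_cancel₀ hκ0.ne', ENNReal.coe_one, one_mul]
          _ ≤ ((κ⁻¹ : ℝ≥0) : ℝ≥0∞) * (ENNReal.ofReal r * ν (closedBall y (lam * r) ∩ W)) := by
              gcongr
          _ = _ := by ring)
    refine ⟨G, hG, hcap, fun y hy r h1 h2 => ?_⟩
    by_contra h3
    exact hy (hYG ⟨r, h1, h2, not_le.1 h3⟩)
  have hsubΩ : ∀ y ∈ ball x0 n, ∀ r : ℝ, lam * r ≤ 1 → closedBall y (lam * r) ⊆ ball x0 (n + 1) := by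
    intro y hy r hr z hz
    rw [mem_closedBall] at hz
    rw [mem_ball] at hy ⊢
    linarith [dist_triangle z y x0]
  have hAR : ∀ y ∈ ball x0 n, ∀ ρ : ℝ, 0 < ρ → (∀ r, 0 < r → r ≤ ρ →
      μ (ball y r ∩ E) ≤ γ * μ (ball y r)) →
      ∃ m : ℕ, y ∈ AR μ E γ (ball x0 n) (1 / ((m : ℝ) + 1)) := by
    intro y hy ρ hρ h
    obtain ⟨m, hm⟩ := exists_nat_one_div_lt hρ
    exact ⟨m, hy, fun r h1 h2 => h r h1 (h2.le.trans hm.le)⟩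
  constructor
  · intro ε hε
    obtain ⟨G1, hG1o, hG1c, hG1⟩ := cover_N hdb hP hγ hE hT hν hz (ENNReal.half_pos hε.ne')
    have hMt : C * ((κ⁻¹ : ℝ≥0) : ℝ≥0∞) ≠ ∞ := ENNReal.mul_ne_top ENNReal.coe_ne_top ENNReal.coe_ne_top
    have hδ : 0 < ε / 2 / (C * ((κ⁻¹ : ℝ≥0) : ℝ≥0∞)) := ENNReal.div_pos (ENNReal.half_pos hε.ne').ne' hMt
    obtain ⟨U, hUs, hUo, hUν⟩ := Set.exists_isOpen_lt_of_lt _ _ (hz ▸ hδ)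
    obtain ⟨G2, hG2o, hG2c, hG2⟩ := hGW U hUo.measurableSet
    refine ⟨G1 ∪ G2, hG1o.union hG2o, (hG1c.union (hG2c.mono (b := ε / 2) ?_)).mono
      (ENNReal.add_halves ε).le, ?_⟩
    · calc C * ((κ⁻¹ : ℝ≥0) : ℝ≥0∞) * ν U ≤ _ := mul_le_mul_right hUν.le _
        _ ≤ ε / 2 := ENNReal.mul_div_le
    intro x hx hxE hxG
    have hxev : ∀ c : ℝ≥0, 0 < c → ∀ᶠ r : ℝ in 𝓝[>] 0, μ (ball x r ∩ E) ≤ c * μ (ball x r) := by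
      intro c hc
      have := ENNReal.tendsto_nhds_zero.1 hxE c (by exact_mod_cast hc)
      filter_upwards [this, self_mem_nhdsWithin] with r h1 h2
      rwa [ENNReal.div_le_iff (hdb.pos x r h2).ne' (hdb.fin x r).ne] at h1
    have hxU : x ∈ U := by
      obtain ⟨ρ, hρ, hρ'⟩ := (mem_nhdsGT_iff_exists_Ioc_subset).1 (hxev γ hγ0)
      obtain ⟨m, hm⟩ := hAR x hx ρ hρ (fun r h1 h2 => hρ' ⟨h1, h2⟩)
      exact hUs (mem_iUnion.2 ⟨m, subset_closure hm⟩)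
    obtain ⟨s, hs, hsU⟩ := Metric.isOpen_iff.1 hUo x hxU
    have hl0 : 0 < lam := by linarith
    obtain ⟨t, ht, ht0, hts, htl⟩ : ∃ t : ℝ, μ (ball x t ∩ E) ≤ ((β / D ^ 2 : ℝ≥0) : ℝ≥0∞) * μ (ball x t) ∧
        0 < t ∧ t < s / lam ∧ t < 1 / lam := by
      have h2 : 0 < s / lam := by positivity
      have h3 : 0 < 1 / lam := by positivity
      have := (hxev (β / D ^ 2) (by positivity)).and
        (inter_mem (Ioo_mem_nhdsGT h2) (Ioo_mem_nhdsGT h3) :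
          ∀ᶠ r : ℝ in 𝓝[>] 0, r ∈ Ioo 0 (s / lam) ∧ r ∈ Ioo 0 (1 / lam))
      obtain ⟨t, h4, h5, h6⟩ := this.exists
      exact ⟨t, h4, h5.1, h5.2, h6.2⟩
    rw [lt_div_iff₀ hl0] at hts htl
    obtain ⟨ρ, hρ, rfl⟩ : ∃ ρ, 0 < ρ ∧ t = 2 * ρ := ⟨t / 2, by positivity, by ring⟩
    have hxn : 0 < n - dist x x0 := by rw [mem_ball] at hx; linarith
    refine ⟨min ρ (min (s / 2) (n - dist x x0)), by positivity, ?_⟩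
    intro y hy hyG
    rw [mem_ball, lt_min_iff, lt_min_iff] at hy
    obtain ⟨hy1, hy2, hy3⟩ := hy
    have hyn : y ∈ ball x0 n := by
      rw [mem_ball]; linarith [dist_triangle y x x0]
    have hybox := boxing hdb hP hγ hβ hκ hE hν (y := y) hρ (hsubΩ y hyn ρ (by nlinarith)) (by
        calc μ (ball y ρ ∩ E) ≤ μ (ball x (2 * ρ) ∩ E) := by
              gcongr
              exact ball_subset_ball' (by linarith)
          _ ≤ _ := ht
          _ ≤ ((β / D ^ 2 : ℝ≥0) : ℝ≥0∞) * (D ^ 2 * μ (ball y ρ)) := by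
              gcongr
              apply hdb.ball_le 2 hρ
              rw [dist_comm]; linarith
          _ = _ := by
              rw [← mul_assoc]
              congr 1
              norm_cast
              field_simp) (by
        intro r h1 h2
        have h3 := hG2 y (fun h => hyG (Or.inr h)) r h1 (by nlinarith)
        rwa [inter_eq_left.2] at h3
        refine Subset.trans ?_ hsU
        intro z hz
        rw [mem_closedBall] at hz
        rw [mem_ball]
        nlinarith [dist_triangle z y x])
    obtain ⟨m, hm⟩ := hAR y hyn ρ hρ hybox
    by_contra hne
    exact hyG (Or.inl (hG1 m y hm hne))
  · intro hd ε hε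
    obtain ⟨G1, hG1o, hG1c, hG1⟩ := cover_N hdb hP hγ hE hT hν hz hε
    obtain ⟨G2, hG2o, hG2c, hG2⟩ := hGW univ MeasurableSet.univ
    refine ⟨G2 ∪ G1, hG2o.union hG1o, ((hG2c.mono ?_).union hG1c), ?_⟩
    · push_cast
      gcongr
      exact hν.fin
    intro y hy hyG
    have hl0 : 0 < lam⁻¹ := by positivity
    have hl1 : lam * lam⁻¹ = 1 := mul_inv_cancel₀ (by linarith)
    have hybox := boxing hdb hP hγ hβ hκ hE hν (y := y) hl0 (hsubΩ y hy _ hl1.le) (hd y hy) (by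
        intro r h1 h2
        have h3 := hG2 y (fun h => hyG (Or.inl h)) r h1 (h2.trans (inv_le_one_of_one_le₀ hlam))
        rwa [inter_univ] at h3)
    obtain ⟨m, hm⟩ := hAR y hy _ hl0 hybox
    by_contra hne
    exact hyG (Or.inr (hG1 m y hm hne))

/-! ### Coarea -/

lemma ramp_adm {Ω : Set X} (hΩ : IsOpen Ω) {v : X → ℝ} {g : X → ℝ≥0∞} (hv : Measurable v)
    (hc : ContinuousOn v Ω) (hg : Measurable g) (hug : UGOn Ω v g) {h : ℝ} (hh : 0 < h) (τ : ℝ) :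
    Adm Ω (fun x => clamp ((τ - v x) / h))
      ({x | τ - 2 * h < v x ∧ v x < τ + h}.indicator fun x => ENNReal.ofReal (1 / h) * g x) where
  vm := clamp_cont.measurable.comp (by fun_prop)
  v01 x := clamp_mem _
  gm := by
    refine Measurable.indicator (by fun_prop) ?_
    exact (measurableSet_lt measurable_const hv).inter (measurableSet_lt hv measurable_const)
  ug := by
    apply ugOn_of_local
    intro x hx
    have hop : ∀ O : Set ℝ, IsOpen O → IsOpen (Ω ∩ v ⁻¹' O) := fun O hO =>
      hc.isOpen_inter_preimage hΩ hO
    by_cases h1 : v x < τ - h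
    · refine ⟨_, hop (Iio (τ - h)) isOpen_Iio, ⟨hx, h1⟩, 1, one_pos, fun γ hγ _ => ?_⟩
      have e : ∀ t ∈ Icc 0 γ.len, clamp ((τ - v (γ.toFun t)) / h) = 1 := by
        intro t ht
        have h2 : v (γ.toFun t) < τ - h := (hγ t ht).1.2
        apply clamp_of_ge
        rw [le_div_iff₀ hh]; linarith
      unfold UGIneq
      simp only []
      rw [e 0 ⟨le_rfl, γ.len_nonneg⟩, e γ.len ⟨γ.len_nonneg, le_rfl⟩]
      simp
    by_cases h2 : τ < v x
    · refine ⟨_, hop (Ioi τ) isOpen_Ioi, ⟨hx, h2⟩, 1, one_pos, fun γ hγ _ => ?_⟩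
      have e : ∀ t ∈ Icc 0 γ.len, clamp ((τ - v (γ.toFun t)) / h) = 0 := by
        intro t ht
        have h2 : τ < v (γ.toFun t) := (hγ t ht).1.2
        apply clamp_of_le
        exact div_nonpos_of_nonpos_of_nonneg (by linarith) hh.le
      unfold UGIneq
      simp only []
      rw [e 0 ⟨le_rfl, γ.len_nonneg⟩, e γ.len ⟨γ.len_nonneg, le_rfl⟩]
      simp
    push Not at h1 h2
    refine ⟨_, hop (Ioo (τ - 2 * h) (τ + h)) isOpen_Ioo, ⟨hx, by linarith, by linarith⟩, 1, one_pos,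
      fun γ hγ _ => ?_⟩
    have hu := hug γ (hγ.mono inter_subset_right)
    unfold UGIneq at hu ⊢
    set a := γ.toFun 0
    set b := γ.toFun γ.len
    calc ENNReal.ofReal |clamp ((τ - v a) / h) - clamp ((τ - v b) / h)|
        ≤ ENNReal.ofReal (1 / h * |v a - v b|) := by
          apply ENNReal.ofReal_le_ofReal
          refine (clamp_lip _ _).trans (le_of_eq ?_)
          rw [← sub_div, abs_div, abs_of_pos hh, abs_sub_comm (v a)]
          rw [show τ - v a - (τ - v b) = v b - v a by ring]
          ring
      _ = ENNReal.ofReal (1 / h) * ENNReal.ofReal |v a - v b| := ENNReal.ofReal_mul (by positivity)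
      _ ≤ ENNReal.ofReal (1 / h) * γ.integral g := mul_le_mul_right hu _
      _ = γ.integral (fun x => ENNReal.ofReal (1 / h) * g x) := by
          unfold Curve.integral
          rw [lintegral_const_mul' _ _ ENNReal.ofReal_ne_top]
      _ ≤ _ := by
          refine Curve.integral_mono hγ ?_
          intro z hz
          rw [indicator_of_mem]
          exact ⟨hz.1.2.1, hz.1.2.2⟩

/-- Approximability of `u` by nice functions with bounded energy on `Ω`. -/
def Appr (μ : Measure X) (Ω : Set X) (u : X → ℝ) (M : ℝ≥0∞) : Prop :=
  ∃ (v : ℕ → X → ℝ) (g : ℕ → X → ℝ≥0∞), (∀ i, Measurable (v i)) ∧ (∀ i, ContinuousOn (v i) Ω) ∧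
    (∀ i, Measurable (g i)) ∧ (∀ i, UGOn Ω (v i) (g i)) ∧ (∀ i, ∫⁻ x in Ω, g i x ∂μ ≤ M) ∧
    Tendsto (fun i => ∫⁻ x in Ω, ENNReal.ofReal |v i x - u x| ∂μ) atTop (𝓝 0)

lemma Appr.neg {μ : Measure X} {Ω : Set X} {u : X → ℝ} {M : ℝ≥0∞} (h : Appr μ Ω u M) :
    Appr μ Ω (fun x => - u x) M := by
  obtain ⟨v, g, h1, h2, h3, h4, h5, h6⟩ := h
  refine ⟨fun i x => - v i x, g, fun i => (h1 i).neg, fun i => (h2 i).neg, h3, ?_, h5, ?_⟩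
  · intro i γ hγ
    have := h4 i γ hγ
    unfold UGIneq at this ⊢
    rwa [neg_sub_neg, abs_sub_comm]
  · refine h6.congr fun i => ?_
    congr 1
    ext x
    rw [neg_sub_neg, abs_sub_comm]

lemma coarea {μ : Measure X} {Ω : Set X} (hΩ : IsOpen Ω) (hμ : μ Ω < ∞) {u : X → ℝ}
    (hu : Measurable u) {M : ℝ≥0∞} (h : Appr μ Ω u M) :
    ∃ F : ℝ → ℝ≥0∞, Measurable F ∧ ∫⁻ τ, F τ ≤ 3 * M ∧
      ∀ᵐ τ : ℝ, ∀ T, F τ < T → FinPer μ {x | u x < τ} Ω T := by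
  obtain ⟨v0, g0, h1', h2', h3', h4', h5', h6'⟩ := h
  have hfin : IsFiniteMeasure (μ.restrict Ω) := ⟨by rwa [Measure.restrict_apply_univ]⟩
  have hm : TendstoInMeasure (μ.restrict Ω) v0 atTop u := by
    refine tendstoInMeasure_of_tendsto_eLpNorm (p := 1) one_ne_zero
      (fun n => (h1' n).aestronglyMeasurable) hu.aestronglyMeasurable ?_
    refine h6'.congr fun i => ?_
    rw [eLpNorm_one_eq_lintegral_enorm]
    congr 1
    ext x
    rw [Real.enorm_eq_ofReal_abs, Pi.sub_apply]
  obtain ⟨ns, -, hns⟩ := hm.exists_seq_tendsto_ae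
  obtain ⟨v, hv⟩ : ∃ v : ℕ → X → ℝ, v = fun i => v0 (ns i) := ⟨_, rfl⟩
  obtain ⟨g, hg⟩ : ∃ g : ℕ → X → ℝ≥0∞, g = fun i => g0 (ns i) := ⟨_, rfl⟩
  have h1 : ∀ i, Measurable (v i) := fun i => by rw [hv]; exact h1' _
  have h2 : ∀ i, ContinuousOn (v i) Ω := fun i => by rw [hv]; exact h2' _
  have h3 : ∀ i, Measurable (g i) := fun i => by rw [hg]; exact h3' _
  have h4 : ∀ i, UGOn Ω (v i) (g i) := fun i => by rw [hg, hv]; exact h4' _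
  have h5 : ∀ i, ∫⁻ x in Ω, g i x ∂μ ≤ M := fun i => by rw [hg]; exact h5' _
  have h6 : ∀ᵐ x ∂(μ.restrict Ω), Tendsto (fun i => v i x) atTop (𝓝 (u x)) := by rw [hv]; exact hns
  clear hns hv hg h1' h2' h3' h4' h5' h6' hm
  set s : ℕ → ℝ := fun i => 1 / ((i : ℝ) + 1) with hs
  have hs0 : ∀ i, 0 < s i := fun i => by positivity
  have hslim : Tendsto s atTop (𝓝 0) := tendsto_one_div_add_atTop_nhds_zero_nat
  let P : ℕ → ℝ → X → ℝ≥0∞ := fun i τ =>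
    {x | τ - 2 * s i < v i x ∧ v i x < τ + s i}.indicator fun x => ENNReal.ofReal (1 / s i) * g i x
  let F : ℕ → ℝ → ℝ≥0∞ := fun i τ => ∫⁻ x in Ω, P i τ x ∂μ
  have hPm : ∀ i, Measurable (Function.uncurry (P i)) := by
    intro i
    have e : Function.uncurry (P i) = {p : ℝ × X | p.1 - 2 * s i < v i p.2 ∧ v i p.2 < p.1 + s i}.indicator
        fun p => ENNReal.ofReal (1 / s i) * g i p.2 := by
      ext ⟨τ, x⟩
      simp only [Function.uncurry, P, indicator, mem_ofPred_eq]
      split_ifs <;> rfl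
    rw [e]
    have hvi : Measurable fun p : ℝ × X => v i p.2 := (h1 i).comp measurable_snd
    refine Measurable.indicator (((h3 i).comp measurable_snd).const_mul _) ?_
    exact (measurableSet_lt (by fun_prop) hvi).inter (measurableSet_lt hvi (by fun_prop))
  have hFm : ∀ i, Measurable (F i) := fun i => (hPm i).lintegral_prod_right
  have hFint : ∀ i, ∫⁻ τ, F i τ ≤ 3 * M := by
    intro i
    have e : ∀ x, ∫⁻ τ, P i τ x = 3 * g i x := by
      intro x
      have e1 : ∀ τ, P i τ x = (Ioo (v i x - s i) (v i x + 2 * s i)).indicator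
          (fun _ => ENNReal.ofReal (1 / s i) * g i x) τ := by
        intro τ
        have : (τ - 2 * s i < v i x ∧ v i x < τ + s i) ↔ τ ∈ Ioo (v i x - s i) (v i x + 2 * s i) := by
          rw [mem_Ioo]; constructor <;> rintro ⟨a, b⟩ <;> constructor <;> linarith
        simp only [P, indicator, mem_ofPred_eq, this]
      simp_rw [e1]
      rw [lintegral_indicator measurableSet_Ioo, setLIntegral_const, Real.volume_Ioo,
        mul_right_comm, ← ENNReal.ofReal_mul (by have := hs0 i; positivity)]
      congr 1
      rw [show 1 / s i * (v i x + 2 * s i - (v i x - s i)) = 3 by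
        have := (hs0 i).ne'
        field_simp; ring]
      norm_num
    calc ∫⁻ τ, F i τ = ∫⁻ x in Ω, (∫⁻ τ, P i τ x) ∂μ := lintegral_lintegral_swap (hPm i).aemeasurable
      _ = ∫⁻ x in Ω, 3 * g i x ∂μ := by simp_rw [e]
      _ = 3 * ∫⁻ x in Ω, g i x ∂μ := lintegral_const_mul' _ _ (by norm_num)
      _ ≤ _ := mul_le_mul_right (h5 i) _
  refine ⟨fun τ => liminf (fun i => F i τ) atTop, Measurable.liminf hFm, ?_, ?_⟩
  · refine (lintegral_liminf_le hFm).trans ?_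
    refine (liminf_le_liminf (v := fun _ => 3 * M) (Eventually.of_forall hFint)).trans ?_
    rw [liminf_const]
  have hcount := (Measure.countable_meas_level_set_pos (μ := μ.restrict Ω) hu).ae_notMem volume
  filter_upwards [hcount] with τ hτ T hT δ hδ
  have hτ0 : ∀ᵐ x ∂(μ.restrict Ω), u x ≠ τ := by
    rw [ae_iff]
    simpa using hτ
  have hlim : Tendsto (fun i => ∫⁻ x in Ω, ENNReal.ofReal
      |clamp ((τ - v i x) / s i) - chi {x | u x < τ} x| ∂μ) atTop (𝓝 0) := by
    have hl := tendsto_lintegral_of_dominated_convergence (μ := μ.restrict Ω)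
      (F := fun i x => ENNReal.ofReal |clamp ((τ - v i x) / s i) - chi {x | u x < τ} x|)
      (f := fun _ => 0) (fun _ => 1) ?_ ?_ ?_ ?_
    · simpa using hl
    · intro i
      have := chi_meas (measurableSet_lt hu (measurable_const (a := τ)))
      have h7 : Measurable fun x => clamp ((τ - v i x) / s i) :=
        clamp_cont.measurable.comp (((h1 i).const_sub τ).div_const _)
      exact ENNReal.measurable_ofReal.comp ((h7.sub this).norm)
    · intro i
      refine Eventually.of_forall fun x => ?_
      rw [← ENNReal.ofReal_one]
      exact ENNReal.ofReal_le_ofReal (chi_abs _ _ (clamp_mem _) (chi_mem _ _))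
    · simp only [lintegral_const, one_mul]
      exact measure_ne_top _ _
    · filter_upwards [hτ0, h6] with x hx hxl
      refine tendsto_const_nhds.congr' ?_
      rcases lt_or_gt_of_ne hx with hlt | hgt
      · have e1 : Tendsto (fun i => v i x + s i) atTop (𝓝 (u x + 0)) := hxl.add hslim
        rw [add_zero] at e1
        filter_upwards [(tendsto_order.1 e1).2 τ hlt] with i hi
        rw [chi_of_mem (show x ∈ {x | u x < τ} from hlt), clamp_of_ge]
        · simp
        · rw [le_div_iff₀ (hs0 i)]; linarith
      · filter_upwards [(tendsto_order.1 hxl).1 τ hgt] with i hi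
        rw [chi_of_notMem (show x ∉ {x | u x < τ} from not_lt.2 hgt.le), clamp_of_le]
        · simp
        · exact div_nonpos_of_nonpos_of_nonneg (by linarith) (hs0 i).le
  have hfr : ∃ᶠ i in atTop, F i τ < T := frequently_lt_of_liminf_lt (by isBoundedDefault) hT
  have hev := ENNReal.tendsto_nhds_zero.1 hlim δ hδ
  obtain ⟨i, hi1, hi2⟩ := (hfr.and_eventually hev).exists
  exact ⟨_, _, ramp_adm hΩ (h1 i) (h2 i) (h3 i) (h4 i) (hs0 i) τ, hi2, hi1.le⟩

lemma coarea_ae {μ : Measure X} {Ω : Set X} (hΩ : IsOpen Ω) (hμ : μ Ω < ∞) {u : X → ℝ}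
    (hu : Measurable u) {M : ℝ≥0∞} (hM : M < ∞) (h : Appr μ Ω u M) :
    (∀ᵐ τ : ℝ, ∃ T < ∞, FinPer μ {x | u x < τ} Ω T) ∧
    ∀ (k : ℝ) (δ : ℝ≥0∞), 0 < δ → ∃ τ < k, FinPer μ {x | u x < τ} Ω δ := by
  obtain ⟨F, hF, hFi, hae⟩ := coarea hΩ hμ hu h
  have hne : ∫⁻ τ, F τ ≠ ∞ := ne_top_of_le_ne_top (ENNReal.mul_ne_top (by norm_num) hM.ne) hFi
  constructor
  · filter_upwards [hae, ae_lt_top hF hne] with τ h1 h2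
    refine ⟨F τ + 1, ENNReal.add_lt_top.2 ⟨h2, by norm_num⟩, h1 _ (ENNReal.lt_add_right h2.ne one_ne_zero)⟩
  · intro k δ hδ
    by_contra hcon
    push Not at hcon
    have h1 : ∀ᵐ τ : ℝ, τ ∈ Iio k → δ ≤ F τ := by
      filter_upwards [hae] with τ h1 h2
      by_contra h3
      exact hcon τ h2 (h1 δ (not_le.1 h3))
    have h2 : ∫⁻ τ in Iio k, δ ≤ ∫⁻ τ in Iio k, F τ :=
      setLIntegral_mono_ae' measurableSet_Iio h1
    rw [setLIntegral_const, Real.volume_Iio, ENNReal.mul_top hδ.ne'] at h2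
    exact hne (top_le_iff.1 (h2.trans (setLIntegral_le_lintegral _ _)))

/-! ### Extraction of approximations -/

lemma wug_fix {μ : Measure X} {v : X → ℝ} {g : X → ℝ≥0∞} {Ω : Set X}
    (h : IsWeakUpperGradientOn μ v g Ω) : ∃ g' : X → ℝ≥0∞, Measurable g' ∧ UGOn Ω v g' ∧
      ∫⁻ x in Ω, g' x ∂μ ≤ (∫⁻ x in Ω, g x ∂μ) + 1 := by
  obtain ⟨hm, ρ, hρm, hρi, hρ⟩ := h
  set t := toMeasurable μ {x | g x ≠ hm.mk g x} with ht
  have htm : MeasurableSet t := measurableSet_toMeasurable _ _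
  have ht0 : μ t = 0 := by rw [ht, measure_toMeasurable]; exact hm.ae_eq_mk
  set I := ∫⁻ x, ρ x ∂μ with hI
  set c : ℝ≥0∞ := (I + 1)⁻¹ with hc
  have hc0 : c ≠ 0 := by
    rw [hc, ENNReal.inv_ne_zero]; exact (ENNReal.add_lt_top.2 ⟨hρi, by simp⟩).ne
  have hct : c ≠ ∞ := by rw [hc, ENNReal.inv_ne_top]; simp
  have hcI : c * I ≤ 1 := by
    calc c * I ≤ c * (I + 1) := by gcongr; exact le_self_add
      _ = 1 := ENNReal.inv_mul_cancel (by simp) (ENNReal.add_lt_top.2 ⟨hρi, by simp⟩).ne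
  have him : Measurable (t.indicator fun _ => (∞ : ℝ≥0∞)) := measurable_const.indicator htm
  refine ⟨fun x => hm.mk g x + t.indicator (fun _ => ∞) x + c * ρ x, ?_, ?_, ?_⟩
  · exact (hm.measurable_mk.add him).add (hρm.const_mul c)
  · intro γ hγ
    by_cases hu : UGIneq v g γ
    · refine le_trans hu (Curve.integral_mono hγ fun x _ => ?_)
      by_cases hx : x ∈ t
      · rw [indicator_of_mem hx]; simp
      · have : g x = hm.mk g x := by
          by_contra hne
          exact hx (subset_toMeasurable _ _ hne)
        rw [this, add_assoc]; exact le_self_add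
    · have h1 := hρ γ ⟨hγ, hu⟩
      have h2 : γ.integral (fun x => c * ρ x) = ∞ := by
        unfold Curve.integral at h1 ⊢
        rw [lintegral_const_mul' _ _ hct, h1, ENNReal.mul_top hc0]
      unfold UGIneq
      refine le_trans le_top (h2.symm.le.trans (Curve.integral_mono hγ fun x _ => ?_))
      exact le_add_self
  · rw [lintegral_add_right _ (hρm.const_mul c), lintegral_add_right _ him]
    have e1 : ∫⁻ x in Ω, hm.mk g x ∂μ = ∫⁻ x in Ω, g x ∂μ :=
      lintegral_congr_ae (ae_restrict_of_ae hm.ae_eq_mk.symm)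
    have e2 : ∫⁻ x in Ω, t.indicator (fun _ => (∞ : ℝ≥0∞)) x ∂μ = 0 := by
      rw [lintegral_indicator htm, setLIntegral_const]
      have : μ.restrict Ω t = 0 := le_antisymm ((Measure.restrict_apply_le _ _).trans ht0.le) zero_le
      rw [this, mul_zero]
    rw [e1, e2, add_zero]
    gcongr
    rw [lintegral_const_mul' _ _ hct]
    exact (mul_le_mul_right (setLIntegral_le_lintegral _ _) _).trans hcI

lemma l1_compact {μ : Measure X} {Ω K : Set X} (hK : IsCompact K) (hKΩ : K ⊆ Ω) {v : ℕ → X → ℝ}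
    {u : X → ℝ} (h : L1LocConv μ Ω v u) :
    Tendsto (fun i => ∫⁻ y in K ∩ Ω, ENNReal.ofReal |v i y - u y| ∂μ) atTop (𝓝 0) := by
  refine hK.induction_on (p := fun s =>
    Tendsto (fun i => ∫⁻ y in s ∩ Ω, ENNReal.ofReal |v i y - u y| ∂μ) atTop (𝓝 0)) ?_ ?_ ?_ ?_
  · simp
  · intro s t hst ht
    refine tendsto_of_tendsto_of_tendsto_of_le_of_le tendsto_const_nhds ht (fun i => zero_le) ?_
    intro i
    exact lintegral_mono_set (inter_subset_inter_left _ hst)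
  · intro s t hs ht
    have := hs.add ht
    rw [add_zero] at this
    refine tendsto_of_tendsto_of_tendsto_of_le_of_le tendsto_const_nhds this (fun i => zero_le) ?_
    intro i
    simp only []
    rw [union_inter_distrib_right]
    exact lintegral_union_le _ _ _
  · intro x hx
    obtain ⟨r, hr, hl⟩ := h x (hKΩ hx)
    refine ⟨ball x r, mem_nhdsWithin_of_mem_nhds (ball_mem_nhds x hr), ?_⟩
    simp_rw [inter_comm (ball x r)]
    exact hl

lemma appr_of_bv {μ : Measure X} [ProperSpace X] {u u' : X → ℝ} (hu : MemBVLoc μ u)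
    (huu : u =ᵐ[μ] u') (x0 : X) (R : ℝ) : ∃ M < ∞, Appr μ (ball x0 R) u' M := by
  have ht := hu.2 (ball x0 (R + 1)) isOpen_ball isBounded_ball
  unfold tvOpen at ht
  simp only [iInf_lt_iff] at ht
  obtain ⟨v, g, hlip, hmin, hconv, hlim⟩ := ht
  obtain ⟨M0, hM1, hM2⟩ := exists_between hlim
  have hfr : ∃ᶠ i in atTop, ∫⁻ x in ball x0 (R + 1), g i x ∂μ < M0 :=
    frequently_lt_of_liminf_lt (by isBoundedDefault) hM1
  obtain ⟨φ, hφ, hφM⟩ := extraction_of_frequently_atTop hfr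
  have hfix := fun i => wug_fix (hmin i).1
  choose g' hg'm hg'u hg'i using hfix
  have hsub : ball x0 R ⊆ ball x0 (R + 1) := ball_subset_ball (by linarith)
  have hcont : ∀ i, ContinuousOn (v i) (ball x0 (R + 1)) := by
    intro i x hx
    obtain ⟨r, hr, K, hK⟩ := hlip i x hx
    have := hK.continuousOn x ⟨hx, mem_ball_self hr⟩
    refine this.mono_of_mem_nhdsWithin ?_
    exact inter_mem self_mem_nhdsWithin (mem_nhdsWithin_of_mem_nhds (ball_mem_nhds x hr))
  have heq : ∀ i, ∀ x ∈ ball x0 R, (ball x0 R).indicator (v i) x = v i x :=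
    fun i x hx => indicator_of_mem hx _
  refine ⟨M0 + 1, ENNReal.add_lt_top.2 ⟨hM2, by simp⟩, fun i => (ball x0 R).indicator (v (φ i)),
    fun i => g' (φ i), ?_, ?_, fun i => hg'm _, ?_, ?_, ?_⟩
  · intro i
    classical
    simp only []
    rw [← piecewise_eq_indicator]
    exact ContinuousOn.measurable_piecewise ((hcont (φ i)).mono hsub) continuousOn_const
      measurableSet_ball
  · intro i
    exact ((hcont (φ i)).mono hsub).congr (heq _)
  · intro i γ hγ
    have := hg'u (φ i) γ (hγ.mono hsub)
    unfold UGIneq at this ⊢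
    simp only []
    rwa [heq _ _ (hγ 0 ⟨le_rfl, γ.len_nonneg⟩), heq _ _ (hγ γ.len ⟨γ.len_nonneg, le_rfl⟩)]
  · intro i
    calc ∫⁻ x in ball x0 R, g' (φ i) x ∂μ ≤ ∫⁻ x in ball x0 (R + 1), g' (φ i) x ∂μ :=
          lintegral_mono_set hsub
      _ ≤ _ := hg'i _
      _ ≤ _ := by gcongr; exact (hφM i).le
  · have h1 := l1_compact (isCompact_closedBall x0 R) (closedBall_subset_ball (by linarith)) hconv
    have h2 := h1.comp hφ.tendsto_atTop
    refine tendsto_of_tendsto_of_tendsto_of_le_of_le tendsto_const_nhds h2 (fun i => zero_le) ?_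
    intro i
    simp only [Function.comp]
    calc ∫⁻ x in ball x0 R, ENNReal.ofReal |(ball x0 R).indicator (v (φ i)) x - u' x| ∂μ
        = ∫⁻ x in ball x0 R, ENNReal.ofReal |v (φ i) x - u x| ∂μ := by
          refine setLIntegral_congr_fun_ae measurableSet_ball ?_
          filter_upwards [huu] with x hx hxb
          rw [heq _ _ hxb, hx]
      _ ≤ _ := lintegral_mono_set (subset_inter ball_subset_closedBall hsub)

/-! ### Final assembly -/

lemma ext_mono {μ : Measure X} {E F : Set X} (h : E ⊆ F) : mExterior μ F ⊆ mExterior μ E := by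
  intro x hx
  refine tendsto_of_tendsto_of_tendsto_of_le_of_le tendsto_const_nhds hx (fun i => zero_le) ?_
  intro r
  exact ENNReal.div_le_div_right (measure_mono (inter_subset_inter_right _ h)) _

lemma ext_union {μ : Measure X} {D : ℝ≥0} (hdb : DB μ D) {E F : Set X} (h : E ∪ F = univ) {x : X}
    (hE : x ∈ mExterior μ E) (hF : x ∈ mExterior μ F) : False := by
  have h1 : Tendsto (fun r => μ (ball x r ∩ E) / μ (ball x r) + μ (ball x r ∩ F) / μ (ball x r))
      (𝓝[>] (0 : ℝ)) (𝓝 (0 + 0)) := Tendsto.add hE hF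
  rw [add_zero] at h1
  obtain ⟨r, hr, hr0⟩ := (((tendsto_order.1 h1).2 1 one_pos).and self_mem_nhdsWithin).exists
  rw [← ENNReal.add_div] at hr
  refine absurd hr (not_lt.2 ?_)
  rw [ENNReal.le_div_iff_mul_le (Or.inl (hdb.pos x r hr0).ne') (Or.inl (hdb.fin x r).ne), one_mul]
  refine le_trans (le_of_eq ?_) (measure_union_le _ _)
  rw [← inter_union_distrib_left, h, inter_univ]

lemma half_thm {μ : Measure X} {D : ℝ≥0} (hdb : DB μ D) {CP lam : ℝ} (hP : Poincare μ CP lam)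
    [ProperSpace X] {u : X → ℝ} (hu : Measurable u) (x0 : X)
    (hA : ∀ R : ℝ, ∃ M < ∞, Appr μ (ball x0 R) u M) {ε : ℝ≥0∞} (hε : 0 < ε) :
    ∃ G, IsOpen G ∧ CapLe μ G ε ∧ (∀ x ∉ G, ∃ τ : ℝ, x ∈ mExterior μ {y | u y < τ}) ∧
      (∀ x ∉ G, ∀ a b : ℝ, a < b → x ∈ mExterior μ {y | u y < b} →
        ∃ τ : ℝ, a < τ ∧ ∃ ρ : ℝ, 0 < ρ ∧ ∀ y ∈ ball x ρ, y ∉ G → y ∈ mExterior μ {y | u y < τ}) := by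
  have hlam := hP.2.1
  obtain ⟨β, C, hβ, hcore⟩ := core hdb hP
  have hmeas : ∀ τ, MeasurableSet {y | u y < τ} := fun τ => measurableSet_lt hu measurable_const
  have hca : ∀ n : ℕ, (∀ᵐ τ : ℝ, ∃ T < ∞, FinPer μ {x | u x < τ} (ball x0 ((n : ℝ) + 1)) T) ∧
      ∀ (k : ℝ) (δ : ℝ≥0∞), 0 < δ → ∃ τ < k, FinPer μ {x | u x < τ} (ball x0 ((n : ℝ) + 1)) δ := by
    intro n
    obtain ⟨M, hM, hAp⟩ := hA ((n : ℝ) + 1)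
    exact coarea_ae isOpen_ball (hdb.fin _ _) hu hM hAp
  -- part A
  have hQ : ∀ n : ℕ, ∃ Q : Set ℝ, Q ⊆ {τ | ∃ T < ∞, FinPer μ {x | u x < τ} (ball x0 ((n : ℝ) + 1)) T} ∧
      Q.Countable ∧ Dense Q := by
    intro n
    exact (Measure.dense_of_ae (hca n).1).exists_countable_dense_subset
  choose Q hQs hQc hQd using hQ
  have hinst : ∀ n, Countable (Q n) := fun n => (hQc n).to_subtype
  obtain ⟨e, he0, hes⟩ := ENNReal.exists_pos_sum_of_countable' (ENNReal.half_pos hε.ne').ne'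
    (Σ n : ℕ, Q n)
  have hGA : ∀ i : (Σ n : ℕ, Q n), ∃ G, IsOpen G ∧ CapLe μ G (e i) ∧
      ∀ x ∈ ball x0 (i.1 : ℝ), x ∈ mExterior μ {y | u y < (i.2 : ℝ)} → x ∉ G →
          ∃ ρ : ℝ, 0 < ρ ∧ ∀ y ∈ ball x ρ, y ∉ G → y ∈ mExterior μ {y | u y < (i.2 : ℝ)} := by
    rintro ⟨n, τ, hτ⟩
    obtain ⟨T, hT, hFP⟩ := hQs n hτ
    exact (hcore _ x0 n T (hmeas τ) hT hFP).1 _ (he0 _)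
  choose GA hGAo hGAc hGA using hGA
  -- part B
  obtain ⟨f, hf0, hfs⟩ := ENNReal.exists_pos_sum_of_countable' (ENNReal.half_pos hε.ne').ne' ℕ
  have hGB : ∀ n : ℕ, ∃ G, IsOpen G ∧ CapLe μ G (f n) ∧ ∃ τ : ℝ,
      ∀ x ∈ ball x0 (n : ℝ), x ∉ G → x ∈ mExterior μ {y | u y < τ} := by
    intro n
    have hl0 : 0 < lam⁻¹ := by positivity
    obtain ⟨K, hK⟩ := pow_unbounded_of_one_lt (((n : ℝ) + 1) * lam) (one_lt_two)
    have hK' : (n : ℝ) + 1 ≤ 2 ^ K * lam⁻¹ := by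
      rw [← div_eq_mul_inv, le_div_iff₀ (by linarith)]; exact hK.le
    have hDK : (D : ℝ≥0∞) ^ K ≠ ∞ := ENNReal.pow_ne_top ENNReal.coe_ne_top
    have hη : 0 < (β : ℝ≥0∞) * (μ (ball x0 1) / D ^ K) :=
      ENNReal.mul_pos (by exact_mod_cast hβ.ne')
        (ENNReal.div_pos (hdb.pos x0 1 one_pos).ne' hDK).ne'
    have hlow : ∀ y ∈ ball x0 (n : ℝ), μ (ball x0 1) / D ^ K ≤ μ (ball y lam⁻¹) := by
      intro y hy
      refine ENNReal.div_le_of_le_mul' (hdb.ball_le K hl0 ?_)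
      rw [mem_ball'] at hy
      linarith
    have hlim : Tendsto (fun j : ℕ => μ (ball x0 ((n : ℝ) + 1) ∩ {y | u y < -(j : ℝ)})) atTop
        (𝓝 (μ (⋂ j : ℕ, (ball x0 ((n : ℝ) + 1) ∩ {y | u y < -(j : ℝ)})))) := by
      refine tendsto_measure_iInter_atTop
        (fun j => (measurableSet_ball.inter (hmeas _)).nullMeasurableSet) ?_ ⟨0, ?_⟩
      · intro i j hij y hy
        refine ⟨hy.1, ?_⟩
        have h1 : u y < -(j : ℝ) := hy.2
        have h2 : (i : ℝ) ≤ j := by exact_mod_cast hij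
        show u y < -(i : ℝ)
        linarith
      · exact ne_top_of_le_ne_top (hdb.fin _ _).ne (measure_mono inter_subset_left)
    have hemp : (⋂ j : ℕ, (ball x0 ((n : ℝ) + 1) ∩ {y | u y < -(j : ℝ)})) = ∅ := by
      rw [eq_empty_iff_forall_notMem]
      intro y hy
      obtain ⟨j, hj⟩ := exists_nat_gt (- u y)
      have h1 : u y < -(j : ℝ) := (mem_iInter.1 hy j).2
      linarith
    rw [hemp, measure_empty] at hlim
    obtain ⟨j, hj⟩ := ((tendsto_order.1 hlim).2 _ hη).exists
    have hδ : 0 < min 1 (f n / 2 / C) :=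
      lt_min one_pos (ENNReal.div_pos (ENNReal.half_pos (hf0 n).ne').ne' ENNReal.coe_ne_top)
    obtain ⟨τ, hτ, hFP⟩ := (hca n).2 (-(j : ℝ)) _ hδ
    obtain ⟨G, hGo, hGc, hG⟩ := (hcore _ x0 n _ (hmeas τ)
      ((min_le_left _ _).trans_lt ENNReal.one_lt_top) hFP).2 (by
        intro y hy
        calc μ (ball y lam⁻¹ ∩ {x | u x < τ})
            ≤ μ (ball x0 ((n : ℝ) + 1) ∩ {y | u y < -(j : ℝ)}) := by
              apply measure_mono
              apply inter_subset_inter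
              · apply ball_subset_ball'
                rw [mem_ball] at hy
                linarith [inv_le_one_of_one_le₀ hlam]
              · intro z hz
                exact lt_trans hz hτ
          _ ≤ _ := hj.le
          _ ≤ _ := by gcongr; exact hlow y hy) (f n / 2) (ENNReal.half_pos (hf0 n).ne')
    refine ⟨G, hGo, hGc.mono ?_, τ, hG⟩
    calc C * min 1 (f n / 2 / C) + f n / 2 ≤ C * (f n / 2 / C) + f n / 2 := by
          gcongr; exact min_le_right _ _
      _ ≤ f n / 2 + f n / 2 := by gcongr; exact ENNReal.mul_div_le
      _ = f n := ENNReal.add_halves _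
  choose GB hGBo hGBc τB hGB using hGB
  refine ⟨(⋃ i, GA i) ∪ ⋃ n, GB n, (isOpen_iUnion hGAo).union (isOpen_iUnion hGBo),
    ((CapLe.iUnion hGAc).union (CapLe.iUnion hGBc)).mono
      ((add_le_add hes.le hfs.le).trans (ENNReal.add_halves ε).le), ?_, ?_⟩
  · intro x hx
    obtain ⟨n, hn⟩ := exists_nat_gt (dist x x0)
    exact ⟨τB n, hGB n x hn fun h => hx (Or.inr (mem_iUnion.2 ⟨n, h⟩))⟩
  · intro x hx a b hab hxb
    obtain ⟨n, hn⟩ := exists_nat_gt (dist x x0)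
    obtain ⟨τ, hτQ, hτ⟩ := (hQd n).exists_between hab
    obtain ⟨ρ, hρ, hy⟩ := hGA ⟨n, τ, hτQ⟩ x hn (ext_mono (fun y hy => lt_trans hy hτ.2) hxb)
      fun h => hx (Or.inl (mem_iUnion.2 ⟨_, h⟩))
    exact ⟨τ, hτ.1, ρ, hρ, fun y hyb hyG => hy y hyb fun h => hyG (Or.inl (mem_iUnion.2 ⟨_, h⟩))⟩

theorem main_meas {μ : Measure X} {D : ℝ≥0} (hdb : DB μ D) {CP lam : ℝ} (hP : Poincare μ CP lam)
    [ProperSpace X] {u : X → ℝ} (hu : Measurable u) (x0 : X)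
    (hA : ∀ R : ℝ, ∃ M < ∞, Appr μ (ball x0 R) u M) {ε : ℝ} (hε : 0 < ε) :
    ∃ G : Set X, IsOpen G ∧ capa1 μ G < ENNReal.ofReal ε ∧
      (∀ x ∈ Gᶜ, lowerApprox μ u x ≠ ⊥ ∧ lowerApprox μ u x ≠ ⊤) ∧
      LowerSemicontinuousOn (lowerApprox μ u) Gᶜ ∧
      (∀ x ∈ Gᶜ, upperApprox μ u x ≠ ⊥ ∧ upperApprox μ u x ≠ ⊤) ∧
      UpperSemicontinuousOn (upperApprox μ u) Gᶜ := by
  have hε4 : 0 < ENNReal.ofReal (ε / 4) := ENNReal.ofReal_pos.2 (by positivity)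
  obtain ⟨G1, h1o, h1c, h1a, h1b⟩ := half_thm hdb hP hu x0 hA hε4
  obtain ⟨G2, h2o, h2c, h2a, h2b⟩ := half_thm hdb hP (u := fun x => - u x) hu.neg x0
    (fun R => by obtain ⟨M, hM, h⟩ := hA R; exact ⟨M, hM, h.neg⟩) hε4
  have hset : ∀ σ : ℝ, {y | - u y < σ} = {y | - σ < u y} := by
    intro σ; ext y
    simp only [mem_ofPred_eq]
    constructor <;> intro h <;> linarith
  have hcomb : ∀ (x : X) (t σ : ℝ), x ∈ mExterior μ {y | u y < t} → x ∈ mExterior μ {y | σ < u y} →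
      t ≤ σ := by
    intro x t σ hx1 hx2
    by_contra hlt
    refine ext_union hdb ?_ hx1 hx2
    rw [eq_univ_iff_forall]
    intro y
    by_cases h : u y < t
    · exact Or.inl h
    · exact Or.inr (show σ < u y by linarith)
  have hlow : ∀ (x : X) (t : ℝ), x ∈ mExterior μ {y | u y < t} → (t : EReal) ≤ lowerApprox μ u x :=
    fun x t h => le_sSup ⟨t, h, rfl⟩
  have hup : ∀ (x : X) (t : ℝ), x ∈ mExterior μ {y | t < u y} → upperApprox μ u x ≤ (t : EReal) :=
    fun x t h => sInf_le ⟨t, h, rfl⟩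
  have hlow' : ∀ (x : X) (σ : ℝ), x ∈ mExterior μ {y | σ < u y} → lowerApprox μ u x ≤ (σ : EReal) := by
    intro x σ h
    refine sSup_le ?_
    rintro _ ⟨t, ht, rfl⟩
    exact EReal.coe_le_coe_iff.2 (hcomb x t σ ht h)
  have hup' : ∀ (x : X) (t : ℝ), x ∈ mExterior μ {y | u y < t} → (t : EReal) ≤ upperApprox μ u x := by
    intro x t h
    refine le_sInf ?_
    rintro _ ⟨σ, hσ, rfl⟩
    exact EReal.coe_le_coe_iff.2 (hcomb x t σ h hσ)
  have hA1 : ∀ x ∈ (G1 ∪ G2)ᶜ, ∃ t : ℝ, x ∈ mExterior μ {y | u y < t} :=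
    fun x hx => h1a x fun h => hx (Or.inl h)
  have hA2 : ∀ x ∈ (G1 ∪ G2)ᶜ, ∃ σ : ℝ, x ∈ mExterior μ {y | σ < u y} := by
    intro x hx
    obtain ⟨σ, h⟩ := h2a x fun h => hx (Or.inr h)
    rw [hset] at h
    exact ⟨_, h⟩
  refine ⟨G1 ∪ G2, h1o.union h2o, ?_, ?_, ?_, ?_, ?_⟩
  · refine lt_of_le_of_lt ((h1c.union h2c).capa (by simp)) ?_
    rw [← ENNReal.ofReal_add (by positivity) (by positivity)]
    exact (ENNReal.ofReal_lt_ofReal_iff hε).2 (by linarith)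
  · intro x hx
    obtain ⟨t, ht⟩ := hA1 x hx
    obtain ⟨σ, hσ⟩ := hA2 x hx
    exact ⟨((EReal.bot_lt_coe t).trans_le (hlow x t ht)).ne',
      ((hlow' x σ hσ).trans_lt (EReal.coe_lt_top σ)).ne⟩
  · intro x hx a ha
    obtain ⟨_, ⟨t, ht, rfl⟩, hat⟩ := lt_sSup_iff.1 ha
    obtain ⟨s, has, hst⟩ := EReal.lt_iff_exists_real_btwn.1 hat
    obtain ⟨τ, hsτ, ρ, hρ, hy⟩ := h1b x (fun h => hx (Or.inl h)) s t (EReal.coe_lt_coe_iff.1 hst) ht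
    filter_upwards [self_mem_nhdsWithin, mem_nhdsWithin_of_mem_nhds (ball_mem_nhds x hρ)] with y hy1 hy2
    exact has.trans ((EReal.coe_lt_coe_iff.2 hsτ).trans_le
      (hlow y τ (hy y hy2 fun h => hy1 (Or.inl h))))
  · intro x hx
    obtain ⟨t, ht⟩ := hA1 x hx
    obtain ⟨σ, hσ⟩ := hA2 x hx
    exact ⟨((EReal.bot_lt_coe t).trans_le (hup' x t ht)).ne',
      ((hup x σ hσ).trans_lt (EReal.coe_lt_top σ)).ne⟩
  · intro x hx a ha
    obtain ⟨_, ⟨t, ht, rfl⟩, hat⟩ := sInf_lt_iff.1 ha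
    obtain ⟨s, hts, hsa⟩ := EReal.lt_iff_exists_real_btwn.1 hat
    have hts' : -s < -t := neg_lt_neg (EReal.coe_lt_coe_iff.1 hts)
    obtain ⟨τ, hsτ, ρ, hρ, hy⟩ := h2b x (fun h => hx (Or.inr h)) (-s) (-t) hts' (by
      rw [hset, neg_neg]; exact ht)
    filter_upwards [self_mem_nhdsWithin, mem_nhdsWithin_of_mem_nhds (ball_mem_nhds x hρ)] with y hy1 hy2
    have h3 := hy y hy2 fun h => hy1 (Or.inr h)
    rw [hset] at h3
    exact (hup y _ h3).trans_lt ((EReal.coe_lt_coe_iff.2 (show -τ < s by linarith)).trans hsa)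

lemma approx_congr {μ : Measure X} {u u' : X → ℝ} (h : u =ᵐ[μ] u') :
    lowerApprox μ u = lowerApprox μ u' ∧ upperApprox μ u = upperApprox μ u' := by
  have h1 : ∀ (x : X) (r t : ℝ), μ (ball x r ∩ {y | u y < t}) = μ (ball x r ∩ {y | u' y < t}) := by
    intro x r t
    apply measure_congr
    filter_upwards [h] with y hy
    apply propext
    show (y ∈ ball x r ∧ u y < t) ↔ (y ∈ ball x r ∧ u' y < t)
    rw [hy]
  have h2 : ∀ (x : X) (r t : ℝ), μ (ball x r ∩ {y | t < u y}) = μ (ball x r ∩ {y | t < u' y}) := by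
    intro x r t
    apply measure_congr
    filter_upwards [h] with y hy
    apply propext
    show (y ∈ ball x r ∧ t < u y) ↔ (y ∈ ball x r ∧ t < u' y)
    rw [hy]
  constructor
  · funext x
    unfold lowerApprox
    simp_rw [h1]
  · funext x
    unfold upperApprox
    simp_rw [h2]

theorem bv_quasi_semicontinuity_aux
    (μ : Measure X) (hcomp : CompleteSpace X)
    (hdoub : ∃ Cd : ℝ, Doubling μ Cd) (hpoin : ∃ CP lam : ℝ, Poincare μ CP lam)
    (u : X → ℝ) (hu : MemBVLoc μ u) (ε : ℝ) (hε : 0 < ε) :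
    ∃ G : Set X, IsOpen G ∧ capa1 μ G < ENNReal.ofReal ε ∧
      (∀ x ∈ Gᶜ, lowerApprox μ u x ≠ ⊥ ∧ lowerApprox μ u x ≠ ⊤) ∧
      LowerSemicontinuousOn (lowerApprox μ u) Gᶜ ∧
      (∀ x ∈ Gᶜ, upperApprox μ u x ≠ ⊥ ∧ upperApprox μ u x ≠ ⊤) ∧
      UpperSemicontinuousOn (upperApprox μ u) Gᶜ := by
  obtain ⟨Cd, hCd⟩ := hdoub
  obtain ⟨CP, lam, hP⟩ := hpoin
  have hdb := db_of_doubling hCd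
  have hprop : ProperSpace X := hdb.proper
  have hm : AEMeasurable u μ := by
    have := hu.1.1
    rwa [Measure.restrict_univ] at this
  have hc := approx_congr hm.ae_eq_mk
  rw [hc.1, hc.2]
  rcases isEmpty_or_nonempty X with hX | ⟨⟨x0⟩⟩
  · refine ⟨∅, isOpen_empty, ?_, fun x => isEmptyElim x, fun x => isEmptyElim x,
      fun x => isEmptyElim x, fun x => isEmptyElim x⟩
    have h0 : CapLe μ (∅ : Set X) 0 := by
      refine ⟨fun _ => 0, fun _ => 0, measurable_const, fun x => isEmptyElim x, by simp,
        measurable_const, ?_, by simp⟩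
      intro γ _
      exact isEmptyElim (γ.toFun 0)
    exact lt_of_le_of_lt (h0.capa (by simp)) (ENNReal.ofReal_pos.2 hε)
  · exact main_meas hdb hP hm.measurable_mk x0 (fun R => appr_of_bv hu hm.ae_eq_mk x0 R) hε

/-- Quasi-semicontinuity of `BV` functions: if `u ∈ BV_loc(X)` and
`ε > 0`, then there is an open `G` with `capa₁(G) < ε` such that `u^∧` restricted to
`X \ G` is real-valued and lower semicontinuous and `u^∨` restricted to `X \ G` is
real-valued and upper semicontinuous. -/
theorem bv_quasi_semicontinuity
    (μ : Measure X) (hcomp : CompleteSpace X)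
    (hdoub : ∃ Cd : ℝ, Doubling μ Cd) (hpoin : ∃ CP lam : ℝ, Poincare μ CP lam)
    (u : X → ℝ) (hu : MemBVLoc μ u) (ε : ℝ) (hε : 0 < ε) :
    ∃ G : Set X, IsOpen G ∧ capa1 μ G < ENNReal.ofReal ε ∧
      (∀ x ∈ Gᶜ, lowerApprox μ u x ≠ ⊥ ∧ lowerApprox μ u x ≠ ⊤) ∧
      LowerSemicontinuousOn (lowerApprox μ u) Gᶜ ∧
      (∀ x ∈ Gᶜ, upperApprox μ u x ≠ ⊥ ∧ upperApprox μ u x ≠ ⊤) ∧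
      UpperSemicontinuousOn (upperApprox μ u) Gᶜ := by
  exact bv_quasi_semicontinuity_aux μ hcomp hdoub hpoin u hu ε hε

end PaperBV
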